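/- Let X₁, X₂ be Polish metric spaces, C : X₁ × 𝒫(X₂) → (−∞,+∞] lower semi-continuous, bounded from below, with C(x₁,·) convex for every x₁, and let F₁, F₂ be superlinear admissible entropy functions. Let μ_i ∈ ℳ(X_i) and (μ_i^n)_n ⊂ ℳ(X_i) with μ_i^n → μ_i in the weak* topology for i = 1,2. Then liminf_{n→∞} ℰ_C(μ₁^n, μ₂^n) ≥ ℰ_C(μ₁, μ₂). -/

import Mathlib

open MeasureTheory Filter Set Topology
open scoped ENNReal NNReal BoundedContinuousFunction

noncomputable section

/-- The "positive part" of an extended real number, as an element of `ℝ≥0∞`. -/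
def posE (a : EReal) : ℝ≥0∞ := if a = ⊤ then ⊤ else ENNReal.ofReal a.toReal

/-- Integral of an `EReal`-valued function: positive part minus negative part
(in `EReal`, so that it is always defined). -/
def eIntegral {α : Type*} [MeasurableSpace α] (μ : Measure α) (f : α → EReal) : EReal :=
  ((∫⁻ x, posE (f x) ∂μ : ℝ≥0∞) : EReal) - ((∫⁻ x, posE (-(f x)) ∂μ : ℝ≥0∞) : EReal)

/-- The recession constant `lim_{s→∞} G(s)/s` (as a `limsup`, which coincides with the
limit for convex functions). -/
def recessionOf (G : ℝ → ℝ≥0∞) : ℝ≥0∞ :=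
  Filter.limsup (fun s : ℝ => G s / ENNReal.ofReal s) Filter.atTop

/-- An admissible entropy function: a convex, lower semicontinuous function
`F : [0,∞) → [0,∞]` which is finite at some positive point. -/
structure EntropyFn where
  F : ℝ → ℝ≥0∞
  convex' : ∀ a ∈ Ici (0:ℝ), ∀ b ∈ Ici (0:ℝ), ∀ t : ℝ, 0 ≤ t → t ≤ 1 →
    F (t * a + (1 - t) * b) ≤ ENNReal.ofReal t * F a + ENNReal.ofReal (1 - t) * F b
  lsc : LowerSemicontinuousOn F (Ici (0:ℝ))
  dom : ∃ s : ℝ, 0 < s ∧ F s ≠ ∞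

namespace EntropyFn

/-- The recession constant `F'_∞ = lim_{s→∞} F(s)/s`. -/
def recC (F : EntropyFn) : ℝ≥0∞ := recessionOf F.F

/-- `F` is superlinear if `F'_∞ = ∞`. -/
def Superlinear (F : EntropyFn) : Prop := F.recC = ∞

/-- `F°(φ) := inf_{s ≥ 0} (φ·s + F(s))`, extended to `EReal` arguments. -/
def circ (F : EntropyFn) (φ : EReal) : EReal :=
  ⨅ s : Ici (0:ℝ), φ * ((s : ℝ) : EReal) + ((F.F (s : ℝ) : ℝ≥0∞) : EReal)

/-- The (interior of the) domain of `F°` is taken inside the set where `F°` is not `-∞`. -/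
def circDom (F : EntropyFn) : Set ℝ := {φ : ℝ | F.circ (φ : EReal) ≠ ⊥}

/-- The reverse entropy function `R(r) = r·F(1/r)` for `r > 0`, with `R(0) = F'_∞`. -/
def revF (F : EntropyFn) (r : ℝ) : ℝ≥0∞ :=
  if 0 < r then ENNReal.ofReal r * F.F (1 / r) else F.recC

/-- The Legendre conjugate `R*(ψ) = sup_{s ≥ 0} (s·ψ − R(s))` of the reverse function. -/
def revConj (F : EntropyFn) (ψ : ℝ) : EReal :=
  ⨆ s : Ici (0:ℝ), (((s : ℝ) * ψ : ℝ) : EReal) - ((F.revF (s : ℝ) : ℝ≥0∞) : EReal)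

end EntropyFn

/-- The entropy functional `ℱ(γ|μ) = ∫ F(dγ/dμ) dμ + F'_∞ · γ^⊥(X)`, where
`γ = (dγ/dμ)·μ + γ^⊥` is the Lebesgue decomposition of `γ` with respect to `μ`. -/
def entF {X : Type*} [MeasurableSpace X] (F : EntropyFn) (γ μ : Measure X) : ℝ≥0∞ :=
  (∫⁻ x, F.F ((γ.rnDeriv μ x).toReal) ∂μ) + F.recC * (γ.singularPart μ) Set.univ

/-- The reverse entropy functional `ℛ(μ|γ) = ∫ R(dμ/dγ) dγ + R'_∞ · μ^⊥(X)`. -/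
def revEntF {X : Type*} [MeasurableSpace X] (F : EntropyFn) (μ γ : Measure X) : ℝ≥0∞ :=
  (∫⁻ x, F.revF ((μ.rnDeriv γ x).toReal) ∂γ) + recessionOf F.revF * (μ.singularPart γ) Set.univ

section WOET

variable {X₁ X₂ : Type*} [MeasurableSpace X₁] [MeasurableSpace X₂]

/-- The weak entropy-transport cost
`ℰ_C(γ|μ₁,μ₂) = ℱ₁(γ₁|μ₁) + ℱ₂(γ₂|μ₂) + ∫ C(x₁, γ_{x₁}) dγ₁(x₁)`. -/
def wCost [StandardBorelSpace X₂] [Nonempty X₂]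
    (C : X₁ → ProbabilityMeasure X₂ → EReal) (F₁ F₂ : EntropyFn)
    (μ₁ : Measure X₁) (μ₂ : Measure X₂)
    (γ : Measure (X₁ × X₂)) (hγ : IsFiniteMeasure γ) : EReal :=
  haveI := hγ
  ((entF F₁ γ.fst μ₁ : ℝ≥0∞) : EReal) + ((entF F₂ γ.snd μ₂ : ℝ≥0∞) : EReal) +
    eIntegral γ.fst (fun x₁ => C x₁ ⟨γ.condKernel x₁, inferInstance⟩)

/-- The weak optimal entropy-transport value `ℰ_C(μ₁,μ₂)`. -/
def wOpt [StandardBorelSpace X₂] [Nonempty X₂]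
    (C : X₁ → ProbabilityMeasure X₂ → EReal) (F₁ F₂ : EntropyFn)
    (μ₁ : Measure X₁) (μ₂ : Measure X₂) : EReal :=
  sInf { e : EReal | ∃ (γ : Measure (X₁ × X₂)) (hγ : IsFiniteMeasure γ),
    e = wCost C F₁ F₂ μ₁ μ₂ γ hγ }

variable [TopologicalSpace X₁] [TopologicalSpace X₂]

/-- The dual feasible set `Λ`. -/
def lamSet (C : X₁ → ProbabilityMeasure X₂ → EReal) (F₁ F₂ : EntropyFn) :
    Set ((X₁ →ᵇ ℝ) × (X₂ →ᵇ ℝ)) :=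
  { φ | (∀ x, φ.1 x ∈ interior F₁.circDom) ∧ (∀ x, φ.2 x ∈ interior F₂.circDom) ∧
      ∀ (x₁ : X₁) (p : ProbabilityMeasure X₂),
        ((φ.1 x₁ + ∫ x₂, φ.2 x₂ ∂(p : Measure X₂) : ℝ) : EReal) ≤ C x₁ p }

/-- The dual feasible set `Λ_R`. -/
def lamRSet (C : X₁ → ProbabilityMeasure X₂ → EReal) (F₁ F₂ : EntropyFn) :
    Set ((X₁ →ᵇ ℝ) × (X₂ →ᵇ ℝ)) :=
  { φ | (∃ b : ℝ, ((b : ℝ) : EReal) < ((F₁.F 0 : ℝ≥0∞) : EReal) ∧ ∀ x, φ.1 x ≤ b) ∧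
        (∃ b : ℝ, ((b : ℝ) : EReal) < ((F₂.F 0 : ℝ≥0∞) : EReal) ∧ ∀ x, φ.2 x ≤ b) ∧
        ∀ (x₁ : X₁) (p : ProbabilityMeasure X₂),
          F₁.revConj (φ.1 x₁) + eIntegral (p : Measure X₂) (fun x₂ => F₂.revConj (φ.2 x₂))
            ≤ C x₁ p }

/-- The dual feasible set `Λ_ET` (constraints tested against all pairs of nonnegative finite
measures; on all other signed measures `ET = +∞`, so those constraints are vacuous). -/
def lamETSet [StandardBorelSpace X₂] [Nonempty X₂]
    (C : X₁ → ProbabilityMeasure X₂ → EReal) (F₁ F₂ : EntropyFn) :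
    Set ((X₁ →ᵇ ℝ) × (X₂ →ᵇ ℝ)) :=
  { φ | ∀ (μ₁ : Measure X₁) (μ₂ : Measure X₂), IsFiniteMeasure μ₁ → IsFiniteMeasure μ₂ →
      (((∫ x, φ.1 x ∂μ₁) + ∫ x, φ.2 x ∂μ₂ : ℝ) : EReal) ≤ wOpt C F₁ F₂ μ₁ μ₂ }

/-- The set `Λ_ET^<`. -/
def lamETltSet [StandardBorelSpace X₂] [Nonempty X₂]
    (C : X₁ → ProbabilityMeasure X₂ → EReal) (F₁ F₂ : EntropyFn) :
    Set ((X₁ →ᵇ ℝ) × (X₂ →ᵇ ℝ)) :=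
  { φ ∈ lamETSet C F₁ F₂ |
      (∃ b : ℝ, ((b : ℝ) : EReal) < ((F₁.F 0 : ℝ≥0∞) : EReal) ∧ ∀ x, φ.1 x ≤ b) ∧
      (∃ b : ℝ, ((b : ℝ) : EReal) < ((F₂.F 0 : ℝ≥0∞) : EReal) ∧ ∀ x, φ.2 x ≤ b) }

/-- `R_C φ(x₁) := inf_{p ∈ 𝒫(X₂)} (C(x₁,p) + ∫ φ dp)`. -/
def RCfun (C : X₁ → ProbabilityMeasure X₂ → EReal) (φ : X₂ →ᵇ ℝ) (x₁ : X₁) : EReal :=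
  ⨅ p : ProbabilityMeasure X₂, C x₁ p + ((∫ x₂, φ x₂ ∂(p : Measure X₂) : ℝ) : EReal)

/-- Property (BM) of an admissible entropy function on a space `X`. -/
def HasBM (X : Type*) [TopologicalSpace X] [MeasurableSpace X] (F : EntropyFn) : Prop :=
  ∀ ψ : X →ᵇ ℝ, (∃ b : ℝ, ((b : ℝ) : EReal) < ((F.F 0 : ℝ≥0∞) : EReal) ∧ ∀ x, ψ x ≤ b) →
    ∃ s : X → ℝ, Measurable s ∧ (∃ M : ℝ, ∀ x, |s x| ≤ M) ∧ (∀ x, 0 < s x) ∧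
      ∀ x, ((F.revF (s x) : ℝ≥0∞) : EReal) + F.revConj (ψ x) = ((s x * ψ x : ℝ) : EReal)

end WOET

/-- The functional `ET` extended to pairs of finite signed measures:
it equals `ℰ_C(μ₁,μ₂)` when both arguments are (induced by) nonnegative finite measures,
and `+∞` otherwise. -/
def ETsgn {X₁ X₂ : Type*} [MeasurableSpace X₁] [MeasurableSpace X₂]
    [StandardBorelSpace X₂] [Nonempty X₂]
    (C : X₁ → ProbabilityMeasure X₂ → EReal) (F₁ F₂ : EntropyFn)
    (ν₁ : SignedMeasure X₁) (ν₂ : SignedMeasure X₂) : EReal :=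
  sInf { e : EReal | ∃ (μ₁ : Measure X₁) (h₁ : IsFiniteMeasure μ₁)
      (μ₂ : Measure X₂) (h₂ : IsFiniteMeasure μ₂),
      ν₁ = @Measure.toSignedMeasure X₁ _ μ₁ h₁ ∧ ν₂ = @Measure.toSignedMeasure X₂ _ μ₂ h₂ ∧
      e = wOpt C F₁ F₂ μ₁ μ₂ }

section Martingale

variable {X : Set ℝ}

/-- The martingale condition for a finite measure on `X × X`:
`∫ y dγ_x(y) = x` for `γ₁`-a.e. `x`. -/
def martCond [StandardBorelSpace ↥X] [Nonempty ↥X]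
    (γ : Measure (↥X × ↥X)) (hγ : IsFiniteMeasure γ) : Prop :=
  haveI := hγ
  ∀ᵐ x ∂γ.fst, (∫ y, (y : ℝ) ∂(γ.condKernel x)) = (x : ℝ)

/-- The martingale optimal entropy transport value `ℰ_M(μ₁,μ₂)` (with an `EReal`-valued
cost `c`). -/
def eMart [StandardBorelSpace ↥X] [Nonempty ↥X]
    (c : ↥X → ↥X → EReal) (F₁ F₂ : EntropyFn) (μ₁ μ₂ : Measure ↥X) : EReal :=
  sInf { e : EReal | ∃ (γ : Measure (↥X × ↥X)) (hγ : IsFiniteMeasure γ), martCond γ hγ ∧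
    e = ((entF F₁ γ.fst μ₁ : ℝ≥0∞) : EReal) + ((entF F₂ γ.snd μ₂ : ℝ≥0∞) : EReal) +
        eIntegral γ (fun q => c q.1 q.2) }

/-- The martingale optimal entropy transport value `ℰ_M(μ₁,μ₂)` (with a `[0,∞]`-valued
cost `c`). -/
def eMartNN [StandardBorelSpace ↥X] [Nonempty ↥X]
    (c : ↥X → ↥X → ℝ≥0∞) (F₁ F₂ : EntropyFn) (μ₁ μ₂ : Measure ↥X) : EReal :=
  sInf { e : EReal | ∃ (γ : Measure (↥X × ↥X)) (hγ : IsFiniteMeasure γ), martCond γ hγ ∧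
    e = ((entF F₁ γ.fst μ₁ + entF F₂ γ.snd μ₂ + ∫⁻ q, c q.1 q.2 ∂γ : ℝ≥0∞) : EReal) }

/-- The dual feasible set `Λ_M` for the martingale problem. -/
def lamM (c : ↥X → ↥X → EReal) (F₁ F₂ : EntropyFn) : Set ((↥X →ᵇ ℝ) × (↥X →ᵇ ℝ)) :=
  { φ | (∀ x, φ.1 x ∈ interior F₁.circDom) ∧ (∀ x, φ.2 x ∈ interior F₂.circDom) ∧
      ∃ h : ↥X →ᵇ ℝ, ∀ x₁ x₂ : ↥X,
        ((φ.1 x₁ + φ.2 x₂ + h x₁ * ((x₂ : ℝ) - (x₁ : ℝ)) : ℝ) : EReal) ≤ c x₁ x₂ }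

/-- The perspective function `r·F(θ/r)` with the convention `r·F(θ/r) = θ·F'_∞` for `r = 0`. -/
def perspFn (F : EntropyFn) (r θ : ℝ) : ℝ≥0∞ :=
  if r = 0 then ENNReal.ofReal θ * F.recC else ENNReal.ofReal r * F.F (θ / r)

/-- The homogeneous marginal perspective cost `H(x₁,r₁;x₂,r₂)` (the dependence on
`(x₁,x₂)` is through the value `c = c(x₁,x₂)`). -/
def Hcost (F₁ F₂ : EntropyFn) (c : ℝ≥0∞) (r₁ r₂ : ℝ) : ℝ≥0∞ :=
  if c ≠ ∞ then
    ⨅ θ : Ioi (0:ℝ), perspFn F₁ r₁ (θ : ℝ) + perspFn F₂ r₂ (θ : ℝ) + ENNReal.ofReal (θ : ℝ) * c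
  else F₁.F 0 * ENNReal.ofReal r₁ + F₂.F 0 * ENNReal.ofReal r₂

/-- The functional `ℋ(μ₁,μ₂|γ)`. -/
def hMargFun (F₁ F₂ : EntropyFn) (c : ↥X → ↥X → ℝ≥0∞) (μ₁ μ₂ : Measure ↥X)
    (γ : Measure (↥X × ↥X)) : ℝ≥0∞ :=
  (∫⁻ q, Hcost F₁ F₂ (c q.1 q.2) ((μ₁.rnDeriv γ.fst q.1).toReal)
      ((μ₂.rnDeriv γ.snd q.2).toReal) ∂γ)
    + F₁.F 0 * (μ₁.singularPart γ.fst) Set.univ + F₂.F 0 * (μ₂.singularPart γ.snd) Set.univ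

/-- The functional `ℛ(μ₁,μ₂|γ)`. -/
def rMargFun (F₁ F₂ : EntropyFn) (c : ↥X → ↥X → ℝ≥0∞) (μ₁ μ₂ : Measure ↥X)
    (γ : Measure (↥X × ↥X)) : ℝ≥0∞ :=
  revEntF F₁ μ₁ γ.fst + revEntF F₂ μ₂ γ.snd + ∫⁻ q, c q.1 q.2 ∂γ

/-- The first `p`-homogeneous marginal of a measure on `Y × Y`, `Y = X × [0,∞)`. -/
def hMarg1 (p : ℝ) (α : Measure ((↥X × ℝ≥0) × (↥X × ℝ≥0))) : Measure ↥X :=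
  Measure.map (fun q => q.1.1) (α.withDensity fun q => (q.1.2 : ℝ≥0∞) ^ p)

/-- The second `p`-homogeneous marginal of a measure on `Y × Y`, `Y = X × [0,∞)`. -/
def hMarg2 (p : ℝ) (α : Measure ((↥X × ℝ≥0) × (↥X × ℝ≥0))) : Measure ↥X :=
  Measure.map (fun q => q.2.1) (α.withDensity fun q => (q.2.2 : ℝ≥0∞) ^ p)

/-- Membership in the homogeneous constraint set `ℋ^p_{M,≤}(μ₁,μ₂)`. -/
def memHpM (p : ℝ) (μ₁ μ₂ : Measure ↥X) (α : Measure ((↥X × ℝ≥0) × (↥X × ℝ≥0))) : Prop :=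
  IsFiniteMeasure α ∧ (∫⁻ q, (q.1.2 : ℝ≥0∞) ^ p + (q.2.2 : ℝ≥0∞) ^ p ∂α) ≠ ∞ ∧
    hMarg1 p α ≤ μ₁ ∧ hMarg2 p α ≤ μ₂ ∧
    ∀ h : ↥X →ᵇ ℝ, (∫ q, h q.1.1 * ((q.2.1 : ℝ) - (q.1.1 : ℝ)) ∂α) = 0

end Martingale

/-!
Lifting a plan `γ` to the law `Λ` of `(x, γ_x)` under `γ₁`, a finite measure on `X₁ × 𝒫(X₂)`, turns
the cost term into the linear functional `∫ C dΛ`. Allowing every `Λ`, not only those carried by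
graphs, does not lower the infimum: by Jensen's inequality for the convex lower semi-continuous
`C(x, ·)`, replacing the conditional laws of `Λ` by their barycenters does not increase the cost.
The relaxed functional is jointly lower semi-continuous in `(μ₁, μ₂, Λ)`, the entropies because
Fenchel duality makes them suprema of continuous functionals. Superlinearity bounds the masses and
transfers tightness from the sequences `μᵢⁿ` to the `Λ` of bounded cost, so by Prokhorov's theorem
these lie in one compact set, and infima over it are lower semi-continuous along the sequence.
-/

lemma iInf_le_liminf_of_isCompact {ι A Z β : Type*} [TopologicalSpace A] [TopologicalSpace Z]
    [CompleteLinearOrder β] [DenselyOrdered β] {g : A → Z → β}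
    (hg : LowerSemicontinuous fun q : A × Z => g q.1 q.2) {l : Filter ι} {u : ι → A} {a : A}
    (hu : Tendsto u l (𝓝 a))
    (hcomp : ∀ y < ⨅ z, g a z, ∃ 𝒦, IsCompact 𝒦 ∧ ∀ᶠ i in l, ∀ z, g (u i) z ≤ y → z ∈ 𝒦) :
    ⨅ z, g a z ≤ liminf (fun i => ⨅ z, g (u i) z) l := by
  refine le_of_forall_lt_imp_le_of_dense fun y hy => ?_
  obtain ⟨𝒦, h𝒦, hsub⟩ := hcomp y hy
  have hnear : ∀ᶠ b in 𝓝 a, ∀ z ∈ 𝒦, y < g b z :=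
    h𝒦.eventually_forall_of_forall_eventually fun z _ =>
      hg (a, z) y (hy.trans_le (iInf_le _ z))
  refine le_liminf_of_le (by isBoundedDefault) ?_
  filter_upwards [hsub, hu.eventually hnear] with i hi hlt
  exact le_iInf fun z => le_of_not_gt fun hz => (hlt z (hi z hz.le)).not_gt hz

namespace EntropyFn

/-- The effective domain `{s ≥ 0 | F(s) < ∞}` of an entropy function. -/
def effDom (F : EntropyFn) : Set ℝ := {s | 0 ≤ s ∧ F.F s ≠ ∞}

/-- The convex conjugate `F*(a) = sup_{s ≥ 0} (a s - F(s))`. It is a real supremum, hence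
meaningful only when `F` is superlinear. -/
def conj (F : EntropyFn) (a : ℝ) : ℝ := ⨆ s : F.effDom, (a * s - (F.F s).toReal)

variable (F : EntropyFn)

lemma nonempty_effDom : Nonempty F.effDom :=
  let ⟨s, hs, hFs⟩ := F.dom
  ⟨s, hs.le, hFs⟩

lemma convexOn_toReal : ConvexOn ℝ F.effDom fun s => (F.F s).toReal := by
  have hconv : ∀ ⦃a⦄, a ∈ F.effDom → ∀ ⦃b⦄, b ∈ F.effDom → ∀ ⦃t u : ℝ⦄, 0 ≤ t → 0 ≤ u →
      t + u = 1 → F.F (t * a + u * b) ≤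
        ENNReal.ofReal (t * (F.F a).toReal + u * (F.F b).toReal) := by
    intro a ha b hb t u ht hu htu
    obtain rfl : u = 1 - t := by linarith
    refine (F.convex' a ha.1 b hb.1 t ht (by linarith)).trans_eq ?_
    rw [ENNReal.ofReal_add (by positivity) (by positivity), ENNReal.ofReal_mul ht,
      ENNReal.ofReal_mul hu, ENNReal.ofReal_toReal ha.2, ENNReal.ofReal_toReal hb.2]
  refine ⟨fun a ha b hb t u ht hu htu => ⟨?_, ?_⟩, fun a ha b hb t u ht hu htu => ?_⟩
  · exact add_nonneg (mul_nonneg ht ha.1) (mul_nonneg hu hb.1)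
  · exact ne_top_of_le_ne_top ENNReal.ofReal_ne_top (hconv ha hb ht hu htu)
  · exact ENNReal.toReal_le_of_le_ofReal (by positivity) (hconv ha hb ht hu htu)

/-- The epigraph of an entropy function, as a subset of the plane. -/
def epigraph : Set (ℝ × ℝ) := {z | z.1 ∈ F.effDom ∧ (F.F z.1).toReal ≤ z.2}

lemma convex_epigraph : Convex ℝ F.epigraph := F.convexOn_toReal.convex_epigraph

lemma epigraph_eq : F.epigraph =
    {z | 0 ≤ z.2} ∩
      (fun z : ℝ × ℝ => (z.1, ENNReal.ofReal z.2)) ⁻¹' {p | p.1 ∈ Ici 0 ∧ F.F p.1 ≤ p.2} := by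
  ext ⟨s, y⟩
  constructor
  · rintro ⟨⟨hs, hFs⟩, hy⟩
    exact ⟨ENNReal.toReal_nonneg.trans hy, hs, (ENNReal.le_ofReal_iff_toReal_le hFs
      (ENNReal.toReal_nonneg.trans hy)).2 hy⟩
  · rintro ⟨hy, hs, hFs⟩
    exact ⟨⟨hs, ne_top_of_le_ne_top ENNReal.ofReal_ne_top hFs⟩,
      ENNReal.toReal_le_of_le_ofReal hy hFs⟩

lemma isClosed_epigraph : IsClosed F.epigraph := by
  rw [epigraph_eq]
  exact (isClosed_le continuous_const continuous_snd).inter <|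
    ((lowerSemicontinuousOn_iff_isClosed_epigraph isClosed_Ici).1 F.lsc).preimage
      (continuous_fst.prodMk (ENNReal.continuous_ofReal.comp continuous_snd))

lemma conj_le {a b : ℝ} (h : ∀ s ∈ F.effDom, a * s - (F.F s).toReal ≤ b) : F.conj a ≤ b :=
  haveI := F.nonempty_effDom
  ciSup_le fun s => h s s.2

lemma conj_zero_nonpos : F.conj 0 ≤ 0 :=
  F.conj_le fun s _ => by simp

-- The nonvertical part of Hahn–Banach separation from the epigraph: the multiplier of the second
-- coordinate cannot be negative because the epigraph is unbounded upwards.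
lemma exists_separating_line {s r : ℝ} (h : (s, r) ∉ F.epigraph) :
    ∃ α β u : ℝ, 0 ≤ β ∧ α * s + β * r < u ∧
      ∀ t ∈ F.effDom, u ≤ α * t + β * (F.F t).toReal := by
  obtain ⟨f, u, hsr, hepi⟩ :=
    geometric_hahn_banach_point_closed F.convex_epigraph F.isClosed_epigraph h
  have hf (x y : ℝ) : f (x, y) = f (1, 0) * x + f (0, 1) * y := by
    have : (x, y) = x • ((1 : ℝ), (0 : ℝ)) + y • ((0 : ℝ), (1 : ℝ)) := by simp
    rw [this, map_add, map_smul, map_smul, smul_eq_mul, smul_eq_mul]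
    ring
  refine ⟨f (1, 0), f (0, 1), u, ?_, by rwa [← hf], fun t ht => ?_⟩
  · by_contra! hneg
    obtain ⟨t, ht⟩ := F.nonempty_effDom
    have hup := hepi (t, max (F.F t).toReal ((u - f (1, 0) * t) / f (0, 1)))
      ⟨ht, le_max_left _ _⟩
    have hle := (div_le_iff_of_neg hneg).1
      (le_max_right (F.F t).toReal ((u - f (1, 0) * t) / f (0, 1)))
    rw [hf] at hup
    linarith
  · rw [← hf]
    exact (hepi (t, (F.F t).toReal) ⟨ht, le_rfl⟩).le

lemma exists_lt_mul_sub_conj {s r : ℝ} (h : (s, r) ∉ F.epigraph) :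
    ∃ a : ℝ, r < a * s - F.conj a := by
  obtain ⟨α, β, u, hβ, hsr, hepi⟩ := F.exists_separating_line h
  rcases hβ.eq_or_lt with rfl | hβ
  · -- A vertical separating line can be tilted into arbitrarily steep affine minorants of `F`.
    simp only [zero_mul, add_zero] at hsr hepi
    obtain ⟨n, hn⟩ := exists_nat_gt (r / (u - α * s))
    rw [div_lt_iff₀ (by linarith)] at hn
    have hconj : F.conj (-(n * α)) ≤ -(n * u) := F.conj_le fun t ht => by
      have := mul_le_mul_of_nonneg_left (hepi t ht) n.cast_nonneg
      have : 0 ≤ (F.F t).toReal := ENNReal.toReal_nonneg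
      linarith
    exact ⟨-(n * α), by linarith⟩
  · have hconj : F.conj (-α / β) ≤ -(u / β) := F.conj_le fun t ht => by
      have := (div_le_iff₀' hβ).2 ((sub_le_iff_le_add').2 (hepi t ht))
      have : -α / β * t + u / β = (u - α * t) / β := by ring
      linarith
    have : r < (u - α * s) / β := (lt_div_iff₀' hβ).2 (by linarith)
    have : -α / β * s + u / β = (u - α * s) / β := by ring
    exact ⟨-α / β, by linarith⟩

variable {F}

lemma Superlinear.exists_mul_le (hF : F.Superlinear) (s₀ k : ℝ) :
    ∃ s₁ > s₀, 1 ≤ s₁ ∧ ENNReal.ofReal (s₁ * k) ≤ F.F s₁ := by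
  have hfreq : ∃ᶠ s in atTop, ENNReal.ofReal k < F.F s / ENNReal.ofReal s :=
    frequently_lt_of_lt_limsup (by isBoundedDefault)
      (ENNReal.ofReal_lt_top.trans_eq hF.symm)
  obtain ⟨s, hk, hs, hs1⟩ :=
    (hfreq.and_eventually ((eventually_gt_atTop s₀).and (eventually_ge_atTop 1))).exists
  refine ⟨s, hs, hs1, ?_⟩
  rw [ENNReal.ofReal_mul (by linarith), mul_comm]
  exact ENNReal.mul_le_of_le_div hk.le

lemma Superlinear.exists_mul_sub_le (hF : F.Superlinear) (a : ℝ) :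
    ∃ b : ℝ, ∀ s ∈ F.effDom, a * s - (F.F s).toReal ≤ b := by
  obtain ⟨s₀, hs₀, hv⟩ := F.dom
  obtain ⟨s₁, hs₀₁, hs₁, hFs₁⟩ := hF.exists_mul_le s₀ (|a| + (F.F s₀).toReal)
  have hF₀ : 0 ≤ (F.F s₀).toReal := ENNReal.toReal_nonneg
  have ha := abs_nonneg a
  refine ⟨|a| * s₁, fun s hs => ?_⟩
  have has : a * s ≤ |a| * s := mul_le_mul_of_nonneg_right (le_abs_self a) hs.1
  have hFs : 0 ≤ (F.F s).toReal := ENNReal.toReal_nonneg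
  rcases le_or_gt s s₁ with h | h
  · have := mul_le_mul_of_nonneg_left h ha
    linarith
  have hdom₀ : s₀ ∈ F.effDom := ⟨hs₀.le, hv⟩
  have hdom₁ : s₁ ∈ F.effDom :=
    F.convexOn_toReal.1.ordConnected.out hdom₀ hs ⟨hs₀₁.le, h.le⟩
  have hsecant := F.convexOn_toReal.secant_mono hdom₀ hdom₁ hs hs₀₁.ne' (hs₀₁.trans h).ne' h.le
  have hslope : |a| ≤ ((F.F s₁).toReal - (F.F s₀).toReal) / (s₁ - s₀) := by
    rw [le_div_iff₀ (by linarith)]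
    have := (ENNReal.ofReal_le_iff_le_toReal hdom₁.2).1 hFs₁
    nlinarith
  have := (le_div_iff₀ (by linarith)).1 (hslope.trans hsecant)
  nlinarith

lemma Superlinear.mul_le_add_conj (hF : F.Superlinear) {s : ℝ} (hs : s ∈ F.effDom) (a : ℝ) :
    a * s ≤ (F.F s).toReal + F.conj a := by
  obtain ⟨b, hb⟩ := hF.exists_mul_sub_le a
  have : a * s - (F.F s).toReal ≤ F.conj a :=
    le_ciSup (f := fun s : F.effDom => a * s - (F.F s).toReal)
      ⟨b, forall_mem_range.2 fun t => hb t t.2⟩ ⟨s, hs⟩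
  linarith

lemma Superlinear.ofReal_mul_sub_conj_le (hF : F.Superlinear) {s : ℝ} (hs : 0 ≤ s) (a : ℝ) :
    ENNReal.ofReal (a * s - F.conj a) ≤ F.F s := by
  by_cases hFs : F.F s = ∞
  · exact hFs ▸ le_top
  · rw [ENNReal.ofReal_le_iff_le_toReal hFs]
    linarith [hF.mul_le_add_conj ⟨hs, hFs⟩ a]

lemma Superlinear.convexOn_conj (hF : F.Superlinear) : ConvexOn ℝ univ F.conj := by
  refine ⟨convex_univ, fun a _ b _ t u ht hu htu => F.conj_le fun s hs => ?_⟩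
  have ha := mul_le_mul_of_nonneg_left (hF.mul_le_add_conj hs a) ht
  have hb := mul_le_mul_of_nonneg_left (hF.mul_le_add_conj hs b) hu
  obtain rfl : u = 1 - t := by linarith
  simp only [smul_eq_mul]
  linarith

lemma Superlinear.continuous_conj (hF : F.Superlinear) : Continuous F.conj :=
  continuousOn_univ.1 (hF.convexOn_conj.continuousOn isOpen_univ)

lemma Superlinear.eq_iSup_ofReal_mul_sub_conj (hF : F.Superlinear) {s : ℝ} (hs : 0 ≤ s) :
    F.F s = ⨆ q : ℚ, ENNReal.ofReal (q * s - F.conj q) := by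
  refine le_antisymm (le_of_forall_lt fun c hc => ?_)
    (iSup_le fun q => hF.ofReal_mul_sub_conj_le hs q)
  obtain ⟨d, hcd, hd⟩ := exists_between hc
  have hmem : (s, d.toReal) ∉ F.epigraph := fun h =>
    (ENNReal.toReal_lt_toReal hd.ne_top h.1.2 |>.2 hd).not_ge h.2
  have hopen : IsOpen {a : ℝ | d.toReal < a * s - F.conj a} :=
    isOpen_lt continuous_const ((continuous_id.mul continuous_const).sub hF.continuous_conj)
  obtain ⟨q, hq⟩ := Rat.isDenseEmbedding_coe_real.dense.exists_mem_open hopen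
    (F.exists_lt_mul_sub_conj hmem)
  calc c < d := hcd
    _ ≤ ENNReal.ofReal (q * s - F.conj q) :=
      (ENNReal.le_ofReal_iff_toReal_le hd.ne_top (ENNReal.toReal_nonneg.trans hq.le)).2 hq.le
    _ ≤ _ := le_iSup (fun q : ℚ => ENNReal.ofReal (q * s - F.conj q)) q

end EntropyFn

lemma ofReal_integral_le_lintegral {X : Type*} [MeasurableSpace X] (μ : Measure X) (f : X → ℝ) :
    ENNReal.ofReal (∫ x, f x ∂μ) ≤ ∫⁻ x, ENNReal.ofReal (f x) ∂μ := by
  by_cases hf : Integrable f μ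
  · rw [integral_eq_lintegral_pos_part_sub_lintegral_neg_part hf]
    exact (ENNReal.ofReal_le_ofReal (sub_le_self _ ENNReal.toReal_nonneg)).trans
      ENNReal.ofReal_toReal_le
  · simp [integral_undef hf]

namespace EntropyFn

variable {X : Type*} [MeasurableSpace X] {F : EntropyFn} {γ μ : Measure X} {φ : X → ℝ} {M : ℝ}

lemma Superlinear.exists_abs_conj_le (hF : F.Superlinear) (M : ℝ) :
    ∃ B : ℝ, ∀ a : ℝ, |a| ≤ M → |F.conj a| ≤ B := by
  obtain ⟨B, hB⟩ :=
    (isCompact_Icc (a := -M) (b := M)).exists_bound_of_continuousOn hF.continuous_conj.continuousOn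
  exact ⟨B, fun a ha => hB a (abs_le.1 ha)⟩

lemma Superlinear.absolutelyContinuous (hF : F.Superlinear) [SigmaFinite γ] [SigmaFinite μ]
    (h : entF F γ μ ≠ ∞) : γ ≪ μ := by
  rw [← Measure.singularPart_eq_zero, ← Measure.measure_univ_eq_zero]
  by_contra hne
  refine h (top_le_iff.1 ((ENNReal.top_mul hne).symm.le.trans ?_))
  rw [← show F.recC = ∞ from hF]
  exact le_add_self

lemma entF_of_absolutelyContinuous [SigmaFinite γ] [SigmaFinite μ] (h : γ ≪ μ) :
    entF F γ μ = ∫⁻ x, F.F (γ.rnDeriv μ x).toReal ∂μ := by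
  simp [entF, (Measure.singularPart_eq_zero γ μ).2 h]

/-- The value `∫ φ dγ - ∫ F*(φ) dμ` of the test function `φ` in the dual formula for the entropy
functional. -/
def dualValue (F : EntropyFn) (γ μ : Measure X) (φ : X → ℝ) : ℝ :=
  ∫ x, φ x ∂γ - ∫ x, F.conj (φ x) ∂μ

lemma Superlinear.integrable_conj_comp (hF : F.Superlinear) [IsFiniteMeasure μ]
    (hφ : Measurable φ) (hM : ∀ x, |φ x| ≤ M) : Integrable (fun x => F.conj (φ x)) μ :=
  let ⟨B, hB⟩ := hF.exists_abs_conj_le M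
  .of_bound (hF.continuous_conj.measurable.comp hφ).aestronglyMeasurable B
    (ae_of_all _ fun x => hB _ (hM x))

section Density

variable [IsFiniteMeasure γ] [IsFiniteMeasure μ]

lemma Superlinear.integrable_mul_rnDeriv_sub_conj (hF : F.Superlinear) (hac : γ ≪ μ)
    (hφ : Measurable φ) (hM : ∀ x, |φ x| ≤ M) :
    Integrable (fun x => φ x * (γ.rnDeriv μ x).toReal - F.conj (φ x)) μ := by
  have hφγ : Integrable φ γ := .of_bound hφ.aestronglyMeasurable M (ae_of_all _ hM)
  refine Integrable.sub ?_ (hF.integrable_conj_comp hφ hM)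
  simpa only [smul_eq_mul, mul_comm] using (integrable_rnDeriv_smul_iff hac).2 hφγ

lemma Superlinear.dualValue_eq_integral (hF : F.Superlinear) (hac : γ ≪ μ)
    (hφ : Measurable φ) (hM : ∀ x, |φ x| ≤ M) :
    F.dualValue γ μ φ = ∫ x, (φ x * (γ.rnDeriv μ x).toReal - F.conj (φ x)) ∂μ := by
  have hφγ : Integrable φ γ := .of_bound hφ.aestronglyMeasurable M (ae_of_all _ hM)
  rw [integral_sub _ (hF.integrable_conj_comp hφ hM), dualValue, ← integral_rnDeriv_smul hac]
  · simp only [smul_eq_mul, mul_comm]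
  · simpa only [smul_eq_mul, mul_comm] using (integrable_rnDeriv_smul_iff hac).2 hφγ

lemma Superlinear.ofReal_dualValue_le_entF (hF : F.Superlinear) (hφ : Measurable φ)
    (hM : ∀ x, |φ x| ≤ M) : ENNReal.ofReal (F.dualValue γ μ φ) ≤ entF F γ μ := by
  by_cases h : entF F γ μ = ∞
  · exact h ▸ le_top
  have hac := hF.absolutelyContinuous h
  rw [hF.dualValue_eq_integral hac hφ hM, entF_of_absolutelyContinuous hac]
  exact (ofReal_integral_le_lintegral _ _).trans
    (lintegral_mono fun x => hF.ofReal_mul_sub_conj_le ENNReal.toReal_nonneg _)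

end Density

/-- A slope `aₖ`, `k < n`, (or `0`) whose affine minorant `s ↦ aₖ s - F*(aₖ)` is the largest at
`s`. It turns the countable supremum that recovers `F` from `F*` into a measurable choice. -/
def bestSlope (F : EntropyFn) (a : ℕ → ℝ) : ℕ → ℝ → ℝ
  | 0, _ => 0
  | n + 1, s =>
    if F.bestSlope a n s * s - F.conj (F.bestSlope a n s) < a n * s - F.conj (a n) then a n
    else F.bestSlope a n s

section BestSlope

variable (F) (a : ℕ → ℝ) (n : ℕ) (s : ℝ)

lemma mul_sub_conj_le_bestSlope_succ : a n * s - F.conj (a n) ≤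
    F.bestSlope a (n + 1) s * s - F.conj (F.bestSlope a (n + 1) s) := by
  rw [bestSlope]
  split_ifs with h
  · exact le_rfl
  · exact not_lt.1 h

lemma monotone_bestSlope_mul_sub_conj :
    Monotone fun n => F.bestSlope a n s * s - F.conj (F.bestSlope a n s) := by
  refine monotone_nat_of_le_succ fun n => ?_
  simp only [bestSlope]
  split_ifs with h
  · exact h.le
  · exact le_rfl

lemma bestSlope_mul_sub_conj_nonneg :
    0 ≤ F.bestSlope a n s * s - F.conj (F.bestSlope a n s) := by
  refine le_trans ?_ (F.monotone_bestSlope_mul_sub_conj a s n.zero_le)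
  simpa [bestSlope] using F.conj_zero_nonpos

lemma exists_abs_bestSlope_le : ∃ M, ∀ s, |F.bestSlope a n s| ≤ M := by
  induction n with
  | zero => exact ⟨0, fun s => by simp [bestSlope]⟩
  | succ n ih =>
    obtain ⟨M, hM⟩ := ih
    refine ⟨max M |a n|, fun s => ?_⟩
    rw [bestSlope]
    split_ifs
    · exact le_max_right _ _
    · exact (hM s).trans (le_max_left _ _)

lemma Superlinear.measurable_bestSlope {F : EntropyFn} (hF : F.Superlinear) :
    Measurable (F.bestSlope a n) := by
  have hconj := hF.continuous_conj.measurable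
  induction n with
  | zero => exact measurable_const
  | succ n ih =>
    simp only [bestSlope]
    exact Measurable.ite (measurableSet_lt (by fun_prop) (by fun_prop)) measurable_const ih

lemma Superlinear.exists_eq_iSup_bestSlope {F : EntropyFn} (hF : F.Superlinear) :
    ∃ a : ℕ → ℝ, ∀ s, 0 ≤ s → F.F s =
      ⨆ n, ENNReal.ofReal (F.bestSlope a n s * s - F.conj (F.bestSlope a n s)) := by
  obtain ⟨e, he⟩ := exists_surjective_nat ℚ
  refine ⟨fun n => e n, fun s hs => le_antisymm ?_
    (iSup_le fun n => hF.ofReal_mul_sub_conj_le hs _)⟩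
  rw [hF.eq_iSup_ofReal_mul_sub_conj hs]
  refine iSup_le fun q => ?_
  obtain ⟨n, rfl⟩ := he q
  exact le_iSup_of_le (n + 1)
    (ENNReal.ofReal_le_ofReal (F.mul_sub_conj_le_bestSlope_succ (fun n => e n) n s))

end BestSlope

lemma absolutelyContinuous_of_ofReal_dualValue_le [IsFiniteMeasure γ] {L : ℝ≥0∞} (hL : L ≠ ∞)
    (h : ∀ φ : X → ℝ, Measurable φ → (∃ M, ∀ x, |φ x| ≤ M) →
      ENNReal.ofReal (F.dualValue γ μ φ) ≤ L) : γ ≪ μ := by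
  refine .mk fun N hN hμN => ?_
  by_contra hγN
  have hconj (n : ℕ) : ∫ x, F.conj (N.indicator (fun _ => (n : ℝ)) x) ∂μ =
      F.conj 0 * μ.real univ := by
    have : (fun x => F.conj (N.indicator (fun _ => (n : ℝ)) x)) =ᵐ[μ] fun _ => F.conj 0 := by
      filter_upwards [measure_eq_zero_iff_ae_notMem.1 hμN] with x hx
      rw [indicator_of_notMem hx]
    rw [integral_congr_ae this, integral_const, smul_eq_mul, mul_comm]
  have hbound (n : ℕ) : n * γ.real N ≤ L.toReal + F.conj 0 * μ.real univ := by
    have := h (N.indicator fun _ => (n : ℝ)) (measurable_const.indicator hN)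
      ⟨n, fun x => by by_cases hx : x ∈ N <;> simp [hx]⟩
    rw [dualValue, hconj, integral_indicator_const _ hN, smul_eq_mul,
      ENNReal.ofReal_le_iff_le_toReal hL] at this
    linarith
  have hpos : 0 < γ.real N := ENNReal.toReal_pos hγN (measure_ne_top _ _)
  obtain ⟨n, hn⟩ := exists_nat_gt ((L.toReal + F.conj 0 * μ.real univ) / γ.real N)
  exact ((div_lt_iff₀ hpos).1 hn).not_ge (hbound n)

lemma Superlinear.entF_le_of_measurable (hF : F.Superlinear) [IsFiniteMeasure γ]
    [IsFiniteMeasure μ] {L : ℝ≥0∞} (h : ∀ φ : X → ℝ, Measurable φ → (∃ M, ∀ x, |φ x| ≤ M) →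
      ENNReal.ofReal (F.dualValue γ μ φ) ≤ L) : entF F γ μ ≤ L := by
  by_cases hL : L = ∞
  · exact hL ▸ le_top
  have hac := absolutelyContinuous_of_ofReal_dualValue_le hL h
  obtain ⟨a, ha⟩ := hF.exists_eq_iSup_bestSlope
  set f : X → ℝ := fun x => (γ.rnDeriv μ x).toReal
  have hf : Measurable f := (Measure.measurable_rnDeriv γ μ).ennreal_toReal
  have hslope (n : ℕ) : Measurable fun x => F.bestSlope a n (f x) :=
    (hF.measurable_bestSlope a n).comp hf
  have hconj := hF.continuous_conj.measurable
  simp only [entF_of_absolutelyContinuous hac, ha _ ENNReal.toReal_nonneg]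
  rw [lintegral_iSup (fun n => by fun_prop) fun m n hmn x =>
    ENNReal.ofReal_le_ofReal (F.monotone_bestSlope_mul_sub_conj a (f x) hmn)]
  refine iSup_le fun n => ?_
  obtain ⟨M, hM⟩ := F.exists_abs_bestSlope_le a n
  rw [← ofReal_integral_eq_lintegral_ofReal
    (hF.integrable_mul_rnDeriv_sub_conj hac (hslope n) fun x => hM (f x))
    (ae_of_all _ fun x => F.bestSlope_mul_sub_conj_nonneg a n (f x)),
    ← hF.dualValue_eq_integral hac (hslope n) fun x => hM (f x)]
  exact h _ (hslope n) ⟨M, fun x => hM (f x)⟩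

end EntropyFn

lemma exists_seq_boundedContinuous_tendsto_ae {X : Type*} [TopologicalSpace X] [NormalSpace X]
    [MeasurableSpace X] [BorelSpace X] (μ : Measure X) [IsFiniteMeasure μ] [μ.WeaklyRegular]
    {φ : X → ℝ} (hφ : Measurable φ) {M : ℝ} (hM : ∀ x, |φ x| ≤ M) :
    ∃ ψ : ℕ → X →ᵇ ℝ, (∀ n x, |ψ n x| ≤ M) ∧
      ∀ᵐ x ∂μ, Tendsto (fun n => ψ n x) atTop (𝓝 (φ x)) := by
  cases isEmpty_or_nonempty X with
  | inl _ => exact ⟨0, fun _ => isEmptyElim, ae_of_all _ isEmptyElim⟩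
  | inr hX =>
  have hM0 : 0 ≤ M := (abs_nonneg _).trans (hM hX.some)
  have hint : Integrable φ μ := .of_bound hφ.aestronglyMeasurable M (ae_of_all _ hM)
  choose g hg _ using fun n : ℕ => hint.exists_boundedContinuous_lintegral_sub_le
    (ε := (n : ℝ≥0∞)⁻¹) (by simp)
  have hL1 : Tendsto (fun n => eLpNorm (⇑(g n) - φ) 1 μ) atTop (𝓝 0) := by
    refine tendsto_of_tendsto_of_tendsto_of_le_of_le tendsto_const_nhds
      ENNReal.tendsto_inv_nat_nhds_zero (fun _ => zero_le) fun n => ?_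
    simpa only [eLpNorm_one_eq_lintegral_enorm, Pi.sub_apply, enorm_sub_rev] using hg n
  obtain ⟨ns, -, hae⟩ := (tendstoInMeasure_of_tendsto_eLpNorm one_ne_zero
    (fun n => (g n).continuous.aestronglyMeasurable) hφ.aestronglyMeasurable
    hL1).exists_seq_tendsto_ae
  refine ⟨fun n => (g (ns n) ⊓ .const X M) ⊔ .const X (-M), fun n x => ?_, ?_⟩
  · exact abs_le.2 ⟨le_sup_right, sup_le inf_le_right (by simpa using hM0)⟩
  · filter_upwards [hae] with x hx
    have hclamp : φ x = (φ x ⊓ M) ⊔ -M := by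
      rw [inf_eq_left.2 (abs_le.1 (hM x)).2, sup_eq_left.2 (abs_le.1 (hM x)).1]
    rw [hclamp]
    exact (hx.min tendsto_const_nhds).max tendsto_const_nhds

namespace EntropyFn

variable {X : Type*} [MeasurableSpace X] {F : EntropyFn}

lemma Superlinear.entF_le_of_boundedContinuous (hF : F.Superlinear) [TopologicalSpace X]
    [NormalSpace X] [BorelSpace X] {γ μ : Measure X} [IsFiniteMeasure γ] [IsFiniteMeasure μ]
    [(γ + μ).WeaklyRegular] {L : ℝ≥0∞}
    (h : ∀ φ : X →ᵇ ℝ, ENNReal.ofReal (F.dualValue γ μ φ) ≤ L) : entF F γ μ ≤ L := by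
  refine hF.entF_le_of_measurable fun φ hφ ⟨M, hM⟩ => ?_
  obtain ⟨ψ, hψM, hψ⟩ := exists_seq_boundedContinuous_tendsto_ae (γ + μ) hφ hM
  obtain ⟨B, hB⟩ := hF.exists_abs_conj_le M
  rw [ae_add_measure_iff] at hψ
  have hγ : Tendsto (fun n => ∫ x, ψ n x ∂γ) atTop (𝓝 (∫ x, φ x ∂γ)) :=
    tendsto_integral_of_dominated_convergence (fun _ => M)
      (fun n => (ψ n).continuous.aestronglyMeasurable) (integrable_const _)
      (fun n => ae_of_all _ (hψM n)) hψ.1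
  have hμ : Tendsto (fun n => ∫ x, F.conj (ψ n x) ∂μ) atTop (𝓝 (∫ x, F.conj (φ x) ∂μ)) := by
    refine tendsto_integral_of_dominated_convergence (fun _ => B)
      (fun n => (hF.continuous_conj.comp (ψ n).continuous).aestronglyMeasurable)
      (integrable_const _) (fun n => ae_of_all _ fun x => hB _ (hψM n x)) ?_
    filter_upwards [hψ.2] with x hx using (hF.continuous_conj.tendsto _).comp hx
  exact le_of_tendsto' ((ENNReal.continuous_ofReal.tendsto _).comp (hγ.sub hμ)) fun n => h (ψ n)

lemma Superlinear.continuous_dualValue (hF : F.Superlinear) [TopologicalSpace X]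
    [OpensMeasurableSpace X] (φ : X →ᵇ ℝ) :
    Continuous fun p : FiniteMeasure X × FiniteMeasure X => F.dualValue p.1 p.2 φ := by
  obtain ⟨B, hB⟩ := hF.exists_abs_conj_le ‖φ‖
  let ψ : X →ᵇ ℝ := .ofNormedAddCommGroup (fun x => F.conj (φ x))
    (hF.continuous_conj.comp φ.continuous) B fun x => hB _ (φ.norm_coe_le_norm x)
  exact ((FiniteMeasure.continuous_integral_boundedContinuousFunction φ).comp continuous_fst).sub
    ((FiniteMeasure.continuous_integral_boundedContinuousFunction ψ).comp continuous_snd)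

lemma Superlinear.lowerSemicontinuous_entF (hF : F.Superlinear) [TopologicalSpace X]
    [TopologicalSpace.PseudoMetrizableSpace X] [BorelSpace X] :
    LowerSemicontinuous fun p : FiniteMeasure X × FiniteMeasure X =>
      entF F (p.1 : Measure X) (p.2 : Measure X) := by
  have hdual (p : FiniteMeasure X × FiniteMeasure X) :
      entF F (p.1 : Measure X) (p.2 : Measure X) =
        ⨆ φ : X →ᵇ ℝ, ENNReal.ofReal (F.dualValue p.1 p.2 φ) :=
    le_antisymm
      (hF.entF_le_of_boundedContinuous
        (le_iSup fun φ : X →ᵇ ℝ => ENNReal.ofReal (F.dualValue p.1 p.2 φ)))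
      (iSup_le fun φ =>
        hF.ofReal_dualValue_le_entF φ.continuous.measurable φ.norm_coe_le_norm)
  simp only [hdual]
  exact lowerSemicontinuous_iSup fun φ =>
    (ENNReal.continuous_ofReal.comp (hF.continuous_dualValue φ)).lowerSemicontinuous

lemma Superlinear.ofReal_mul_sub_le_entF (hF : F.Superlinear) (γ μ : Measure X)
    [IsFiniteMeasure γ] [IsFiniteMeasure μ] {A : Set X} (hA : MeasurableSet A) (a : ℝ) :
    ENNReal.ofReal (a * γ.real A - F.conj a * μ.real A) ≤ entF F γ μ := by
  have hM (x : X) : |A.indicator (fun _ => a) x| ≤ |a| := by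
    by_cases hx : x ∈ A <;> simp [hx]
  have hmeas : Measurable (A.indicator fun _ => a) := measurable_const.indicator hA
  refine (ENNReal.ofReal_le_ofReal ?_).trans (hF.ofReal_dualValue_le_entF hmeas hM)
  have hconj : ∫ x, F.conj (A.indicator (fun _ => a) x) ∂μ ≤
      ∫ x, A.indicator (fun _ => F.conj a) x ∂μ := by
    refine integral_mono (hF.integrable_conj_comp hmeas hM)
      ((integrable_const _).indicator hA) fun x => ?_
    by_cases hx : x ∈ A
    · simp [hx]
    · simpa [hx] using F.conj_zero_nonpos
  rw [integral_indicator_const _ hA, smul_eq_mul] at hconj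
  rw [dualValue, integral_indicator_const _ hA, smul_eq_mul]
  linarith

end EntropyFn

section Tightness

variable {ι X : Type*} [TopologicalSpace X] [MeasurableSpace X]

lemma isTightMeasureSet_range_iff {μ : ι → FiniteMeasure X} :
    IsTightMeasureSet (range fun i => (μ i : Measure X)) ↔
      ∀ ε : ℝ≥0, 0 < ε → ∃ K, IsCompact K ∧ ∀ i, μ i Kᶜ ≤ ε := by
  simp only [isTightMeasureSet_iff_exists_isCompact_measure_compl_le, forall_mem_range]
  constructor
  · intro h ε hε
    obtain ⟨K, hK, hμK⟩ := h ε (by exact_mod_cast hε)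
    refine ⟨K, hK, fun i => ?_⟩
    simpa only [← FiniteMeasure.ennreal_coeFn_eq_coeFn_toMeasure, ENNReal.coe_le_coe] using hμK i
  · intro h ε hε
    obtain ⟨δ, hδ, hδε⟩ := ENNReal.lt_iff_exists_nnreal_btwn.1 hε
    obtain ⟨K, hK, hμK⟩ := h δ (by exact_mod_cast hδ)
    refine ⟨K, hK, fun i => le_trans ?_ hδε.le⟩
    simpa only [← FiniteMeasure.ennreal_coeFn_eq_coeFn_toMeasure, ENNReal.coe_le_coe] using hμK i

lemma EntropyFn.Superlinear.isTightMeasureSet_range [T2Space X] [OpensMeasurableSpace X]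
    {F : EntropyFn} (hF : F.Superlinear) {γ μ : ι → FiniteMeasure X}
    (hμ : IsTightMeasureSet (range fun i => (μ i : Measure X))) {R : ℝ≥0}
    (hR : ∀ i, entF F (γ i : Measure X) (μ i : Measure X) ≤ R) :
    IsTightMeasureSet (range fun i => (γ i : Measure X)) := by
  rw [isTightMeasureSet_range_iff] at hμ ⊢
  intro ε hε
  obtain ⟨a, ha, haε⟩ : ∃ a : ℝ, 0 < a ∧ a * ε = R + 1 :=
    ⟨(R + 1) / ε, div_pos (by positivity) hε, div_mul_cancel₀ _ (NNReal.coe_pos.2 hε).ne'⟩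
  obtain ⟨K, hK, hμK⟩ := hμ (‖F.conj a‖₊ + 1)⁻¹ (by positivity)
  refine ⟨K, hK, fun i => ?_⟩
  have hμKi : F.conj a * (μ i : Measure X).real Kᶜ ≤ 1 := by
    have : (μ i : Measure X).real Kᶜ ≤ (|F.conj a| + 1)⁻¹ := by exact_mod_cast hμK i
    calc F.conj a * (μ i : Measure X).real Kᶜ ≤ (|F.conj a| + 1) * (|F.conj a| + 1)⁻¹ :=
          mul_le_mul ((le_abs_self _).trans (by linarith)) this measureReal_nonneg (by positivity)
      _ = 1 := mul_inv_cancel₀ (by positivity)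
  have hγKi : a * (γ i : Measure X).real Kᶜ - F.conj a * (μ i : Measure X).real Kᶜ ≤ R := by
    have := (hF.ofReal_mul_sub_le_entF (γ i) (μ i) hK.measurableSet.compl a).trans (hR i)
    rw [← ENNReal.ofReal_coe_nnreal] at this
    exact (ENNReal.ofReal_le_ofReal_iff R.coe_nonneg).1 this
  have hγK : (γ i : Measure X).real Kᶜ ≤ ε :=
    le_of_mul_le_mul_left (by linarith) ha
  exact hγK

lemma isTightMeasureSet_range_of_tendsto [PolishSpace X] [BorelSpace X]
    {μ : ℕ → FiniteMeasure X} {μ₀ : FiniteMeasure X} (hμ : Tendsto μ atTop (𝓝 μ₀)) :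
    IsTightMeasureSet (range fun n => (μ n : Measure X)) := by
  let := TopologicalSpace.upgradeIsCompletelyMetrizable X
  cases isEmpty_or_nonempty X with
  | inl _ => exact .of_compactSpace
  | inr hX =>
  -- Adding a unit point mass keeps all masses away from `0`, so that normalizing is continuous.
  let δ : FiniteMeasure X := (diracProba hX.some).toFiniteMeasure
  have hmass (ν : FiniteMeasure X) : (ν + δ).mass = ν.mass + 1 := by
    rw [FiniteMeasure.mass, FiniteMeasure.coeFn_add, Pi.add_apply]
    congr 1
    exact ProbabilityMeasure.mass_toFiniteMeasure _
  have hne (ν : FiniteMeasure X) : ν + δ ≠ 0 := by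
    rw [← FiniteMeasure.mass_nonzero_iff, hmass]
    positivity
  have hadd : Tendsto (fun n => μ n + δ) atTop (𝓝 (μ₀ + δ)) := hμ.add_const δ
  have hnorm : Tendsto (fun n => (μ n + δ).normalize) atTop (𝓝 (μ₀ + δ).normalize) :=
    FiniteMeasure.tendsto_normalize_of_tendsto hadd (hne μ₀)
  have htight := isTightMeasureSet_of_isCompact_closure
    (hnorm.isCompact_insert_range.closure_of_subset (subset_insert _ _))
  obtain ⟨C, hC⟩ := hadd.mass.bddAbove_range
  rw [isTightMeasureSet_range_iff]
  rw [isTightMeasureSet_iff_exists_isCompact_measure_compl_le] at htight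
  intro ε hε
  obtain ⟨K, hK, hle⟩ := htight (ε / (C + 1) : ℝ≥0) (by positivity)
  refine ⟨K, hK, fun n => ?_⟩
  have hKn : (μ n + δ).normalize Kᶜ ≤ ε / (C + 1) := by
    simpa only [← ProbabilityMeasure.ennreal_coeFn_eq_coeFn_toMeasure, ENNReal.coe_le_coe] using
      hle _ ⟨_, mem_range_self n, rfl⟩
  calc μ n Kᶜ ≤ (μ n + δ) Kᶜ := by rw [FiniteMeasure.coeFn_add]; exact le_self_add
    _ = (μ n + δ).mass * (μ n + δ).normalize Kᶜ := FiniteMeasure.self_eq_mass_mul_normalize _ _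
    _ ≤ (C + 1) * (ε / (C + 1)) := by
      gcongr
      exact (hC (mem_range_self n)).trans le_self_add
    _ = ε := mul_div_cancel₀ _ (by positivity)

end Tightness

section ProbabilityMeasureSpace

variable {X Y : Type*} [MeasurableSpace X] [MeasurableSpace Y]

lemma measurable_probabilityMeasure_toMeasure :
    Measurable fun p : ProbabilityMeasure X => (p : Measure X) :=
  measurable_subtype_coe

lemma range_probabilityMeasure_map {f : X → Y} (hf : MeasurableEmbedding f) :
    (range fun p : ProbabilityMeasure X => p.map hf.measurable.aemeasurable) =
      {q : ProbabilityMeasure Y | (q : Measure Y) (range f)ᶜ = 0} := by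
  ext q
  constructor
  · rintro ⟨p, rfl⟩
    simp [ProbabilityMeasure.toMeasure_map, hf.map_apply]
  · intro hq
    have hq' : ∀ᵐ y ∂(q : Measure Y), y ∈ range f := hq
    have hmap : ((q : Measure Y).comap f).map f = q := by
      rw [hf.map_comap, Measure.restrict_eq_self_of_ae_mem hq']
    exact ⟨⟨(q : Measure Y).comap f, hf.isProbabilityMeasure_comap hq'⟩, Subtype.ext hmap⟩

lemma measurableEmbedding_probabilityMeasure_map {f : X → Y} (hf : MeasurableEmbedding f) :
    MeasurableEmbedding fun p : ProbabilityMeasure X => p.map hf.measurable.aemeasurable := by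
  set Φ := fun p : ProbabilityMeasure X => p.map hf.measurable.aemeasurable
  have hΦ : Measurable Φ :=
    ((Measure.measurable_map f hf.measurable).comp
      measurable_probabilityMeasure_toMeasure).subtype_mk
  refine MeasurableEmbedding.iff_comap_eq.2 ⟨fun p q hpq => ?_, ?_, ?_⟩
  · have hcomap (p : ProbabilityMeasure X) : (Φ p : Measure Y).comap f = p := hf.comap_map p
    exact ProbabilityMeasure.toMeasure_injective (by rw [← hcomap p, hpq, hcomap q])
  · refine le_antisymm hΦ.comap_le (Measurable.comap_le ?_)
    let := MeasurableSpace.comap Φ inferInstance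
    refine Measure.measurable_of_measurable_coe _ fun s hs => ?_
    have hs' (p : ProbabilityMeasure X) : (p : Measure X) s = (Φ p : Measure Y) (f '' s) := by
      rw [ProbabilityMeasure.toMeasure_map, hf.map_apply, preimage_image_eq _ hf.injective]
    have hmeas := ((Measure.measurable_coe (hf.measurableSet_image.2 hs)).comp
      measurable_probabilityMeasure_toMeasure).comp (comap_measurable Φ)
    convert hmeas using 1
    exact funext hs'
  · rw [range_probabilityMeasure_map hf]
    exact (Measure.measurable_coe hf.measurableSet_range.compl).comp
      measurable_probabilityMeasure_toMeasure (measurableSet_singleton 0)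

variable [TopologicalSpace X] [TopologicalSpace Y]

lemma isInducing_probabilityMeasure_map [BorelSpace X] [TopologicalSpace.MetrizableSpace Y]
    [SecondCountableTopology Y] [BorelSpace Y] {f : X → Y} (hf : IsInducing f) :
    IsInducing fun p : ProbabilityMeasure X => p.map hf.continuous.measurable.aemeasurable := by
  set Φ := fun p : ProbabilityMeasure X => p.map hf.continuous.measurable.aemeasurable
  refine isInducing_iff_nhds.2 fun p => le_antisymm ?_ ?_
  · exact (ProbabilityMeasure.continuous_map hf.continuous).continuousAt.tendsto.le_comap
  · refine tendsto_id'.1 (tendsto_of_forall_isOpen_le_liminf' fun G hG => ?_)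
    obtain ⟨V, hV, rfl⟩ := hf.isOpen_iff.1 hG
    have := ProbabilityMeasure.le_liminf_measure_open_of_tendsto
      (tendsto_comap (f := Φ) (x := 𝓝 (Φ p))) hV
    simpa only [Φ, ProbabilityMeasure.toMeasure_map,
      Measure.map_apply hf.continuous.measurable hV.measurableSet, id] using this

lemma probabilityMeasure_topology_eq_iInf [OpensMeasurableSpace X] :
    (inferInstance : TopologicalSpace (ProbabilityMeasure X)) =
      ⨅ f : X →ᵇ ℝ≥0, .induced (fun p => ∫⁻ x, f x ∂(p : Measure X)) inferInstance := by
  apply le_antisymm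
  · exact le_iInf fun f =>
      (ProbabilityMeasure.continuous_lintegral_boundedContinuousFunction f).le_induced
  · refine continuous_id_iff_le.1 ?_
    let : TopologicalSpace (ProbabilityMeasure X) :=
      ⨅ f : X →ᵇ ℝ≥0, .induced (fun p => ∫⁻ x, f x ∂(p : Measure X)) inferInstance
    exact ProbabilityMeasure.continuous_iff_forall_continuous_lintegral.2 fun f =>
      continuous_iInf_dom continuous_induced_dom

lemma lowerSemicontinuous_probabilityMeasure_apply [OpensMeasurableSpace X] [HasOuterApproxClosed X]
    {U : Set X} (hU : IsOpen U) :
    LowerSemicontinuous fun p : ProbabilityMeasure X => (p : Measure X) U :=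
  lowerSemicontinuous_iff_le_liminf.2 fun _ =>
    ProbabilityMeasure.le_liminf_measure_open_of_tendsto tendsto_id hU

variable [BorelSpace X]

instance secondCountableTopology_probabilityMeasure [TopologicalSpace.MetrizableSpace X]
    [SecondCountableTopology X] : SecondCountableTopology (ProbabilityMeasure X) := by
  let := TopologicalSpace.metrizableSpaceMetric X
  obtain ⟨ι, hι⟩ := Metric.PiNatEmbed.exists_embedding_to_hilbert_cube (X := X)
  let := TopologicalSpace.metrizableSpaceMetric (ProbabilityMeasure (ℕ → unitInterval))
  exact (isInducing_probabilityMeasure_map hι.isInducing).secondCountableTopology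

instance borelSpace_probabilityMeasure [TopologicalSpace.MetrizableSpace X]
    [SecondCountableTopology X] : BorelSpace (ProbabilityMeasure X) := by
  refine ⟨le_antisymm (Measurable.comap_le ?_) ?_⟩
  · let : MeasurableSpace (ProbabilityMeasure X) := borel _
    have : BorelSpace (ProbabilityMeasure X) := ⟨rfl⟩
    exact .measure_of_isPiSystem_of_isProbabilityMeasure (μ := ProbabilityMeasure.toMeasure)
      (S := {s | IsOpen s}) BorelSpace.measurable_eq isPiSystem_isOpen fun U hU =>
        (lowerSemicontinuous_probabilityMeasure_apply hU).measurable
  · have hgen : (inferInstance : TopologicalSpace (ProbabilityMeasure X)) =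
        .generateFrom (⋃ f : X →ᵇ ℝ≥0,
          preimage (fun p : ProbabilityMeasure X => ∫⁻ x, f x ∂(p : Measure X)) ''
            {s | IsOpen s}) := by
      rw [generateFrom_iUnion, probabilityMeasure_topology_eq_iInf]
      congr 1 with f
      rw [← induced_generateFrom_eq, TopologicalSpace.generateFrom_setOfPred_isOpen]
    rw [borel_eq_generateFrom_of_subbasis hgen]
    refine MeasurableSpace.generateFrom_le fun t ht => ?_
    obtain ⟨f, s, hs, rfl⟩ := mem_iUnion.1 ht
    exact ((Measure.measurable_lintegral f.continuous.measurable.coe_nnreal_ennreal).comp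
      measurable_probabilityMeasure_toMeasure) (IsOpen.measurableSet hs)

end ProbabilityMeasureSpace

lemma standardBorelSpace_of_measurableEmbedding {X Y : Type*} [MeasurableSpace X]
    [MeasurableSpace Y] [StandardBorelSpace Y] {f : X → Y} (hf : MeasurableEmbedding f) :
    StandardBorelSpace X := by
  obtain ⟨τ, hτ, _⟩ := hf.measurableSet_range.standardBorel.polish
  let : TopologicalSpace X := τ.induced hf.equivRange
  refine ⟨this, ⟨?_⟩, hf.equivRange.toEquiv.polishSpace_induced⟩
  rw [← hf.equivRange.measurableEmbedding.comap_eq]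
  exact (congrArg (MeasurableSpace.comap hf.equivRange.toEquiv) hτ.measurable_eq).trans
    borel_comap.symm

instance standardBorelSpace_probabilityMeasure {X : Type*} [MeasurableSpace X]
    [StandardBorelSpace X] : StandardBorelSpace (ProbabilityMeasure X) := by
  let := upgradeStandardBorel X
  let := TopologicalSpace.metrizableSpaceMetric X
  obtain ⟨ι, hι⟩ := Metric.PiNatEmbed.exists_embedding_to_hilbert_cube (X := X)
  let := TopologicalSpace.metrizableSpaceMetric (ProbabilityMeasure (ℕ → unitInterval))
  have : PolishSpace (ProbabilityMeasure (ℕ → unitInterval)) := inferInstance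
  have : StandardBorelSpace (ProbabilityMeasure (ℕ → unitInterval)) := inferInstance
  exact standardBorelSpace_of_measurableEmbedding <| measurableEmbedding_probabilityMeasure_map <|
    hι.continuous.measurableEmbedding hι.injective

section LowerSemicontinuous

variable {Z : Type*}

lemma exists_boundedContinuousFunction_coe_eq [TopologicalSpace Z] {f : Z → ℝ≥0∞}
    (hf : Continuous f) {M : ℝ≥0} (hM : ∀ z, f z ≤ M) :
    ∃ g : Z →ᵇ ℝ≥0, ∀ z, (g z : ℝ≥0∞) = f z := by
  have hf_top (z : Z) : f z ≠ ∞ := ne_top_of_le_ne_top ENNReal.coe_ne_top (hM z)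
  have hM' (z : Z) : (f z).toNNReal ≤ M := ENNReal.toNNReal_mono ENNReal.coe_ne_top (hM z)
  refine ⟨.mkOfBound ⟨fun z => (f z).toNNReal,
    ENNReal.continuousOn_toNNReal.comp_continuous hf hf_top⟩ M fun x y => ?_,
    fun z => ENNReal.coe_toNNReal (hf_top z)⟩
  have hdist :=
    Real.dist_le_of_mem_Icc ⟨NNReal.coe_nonneg _, hM' x⟩ ⟨NNReal.coe_nonneg _, hM' y⟩
  rwa [sub_zero] at hdist

lemma continuous_lintegral_of_le [TopologicalSpace Z] [MeasurableSpace Z] [OpensMeasurableSpace Z]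
    {f : Z → ℝ≥0∞} (hf : Continuous f) {M : ℝ≥0} (hM : ∀ z, f z ≤ M) :
    Continuous fun Λ : FiniteMeasure Z => ∫⁻ z, f z ∂(Λ : Measure Z) := by
  obtain ⟨g, hg⟩ := exists_boundedContinuousFunction_coe_eq hf hM
  simp only [← hg]
  exact continuous_iff_continuousAt.2 fun Λ =>
    FiniteMeasure.tendsto_iff_forall_lintegral_tendsto.1 tendsto_id g

/-- The Moreau–Yosida approximation of `c` at scale `k`, truncated at height `k`: the largest
`k`-Lipschitz function below `min c k`. -/
def lipschitzApprox [EDist Z] (c : Z → ℝ≥0∞) (k : ℕ) (z : Z) : ℝ≥0∞ :=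
  ⨅ y, (min (c y) k + k * edist z y)

section PseudoEMetric

variable [PseudoEMetricSpace Z] (c : Z → ℝ≥0∞)

lemma lipschitzApprox_le_min (k : ℕ) (z : Z) : lipschitzApprox c k z ≤ min (c z) k :=
  (iInf_le _ z).trans (by simp)

lemma monotone_lipschitzApprox : Monotone (lipschitzApprox c) := fun k l hkl z =>
  iInf_mono fun y => by
    have : (k : ℝ≥0∞) ≤ l := by exact_mod_cast hkl
    gcongr

lemma continuous_lipschitzApprox (k : ℕ) : Continuous (lipschitzApprox c k) := by
  refine continuous_of_le_add_edist k (ENNReal.natCast_ne_top k) fun x y => ?_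
  rw [lipschitzApprox, lipschitzApprox, ENNReal.iInf_add]
  refine iInf_mono fun w => ?_
  rw [add_assoc, ← mul_add]
  gcongr
  rw [add_comm]
  exact edist_triangle _ _ _

variable {c}

lemma iSup_lipschitzApprox (hc : LowerSemicontinuous c) (z : Z) :
    ⨆ k, lipschitzApprox c k z = c z := by
  refine le_antisymm (iSup_le fun k => (lipschitzApprox_le_min c k z).trans (min_le_left _ _))
    (le_of_forall_lt fun a ha => ?_)
  obtain ⟨b, hab, hb⟩ := exists_between ha
  obtain ⟨r, hr, hball⟩ := EMetric.mem_nhds_iff.1 (hc z b hb)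
  obtain ⟨m, hm⟩ := ENNReal.exists_nat_gt hb.ne_top
  obtain ⟨n, hn⟩ := ENNReal.exists_nat_mul_gt hr.ne' hb.ne_top
  have hmk : (m : ℝ≥0∞) ≤ max m n := by exact_mod_cast le_max_left m n
  have hnk : (n : ℝ≥0∞) ≤ max m n := by exact_mod_cast le_max_right m n
  refine hab.trans_le (le_iSup_of_le (max m n) (le_iInf fun y => ?_))
  rcases lt_or_ge (edist y z) r with hyz | hyz
  · exact (le_min (hball hyz).le (hm.le.trans (by exact_mod_cast hmk))).trans le_self_add
  · rw [edist_comm] at hyz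
    exact (hn.le.trans (mul_le_mul' (by exact_mod_cast hnk) hyz)).trans le_add_self

end PseudoEMetric

lemma lowerSemicontinuous_lintegral [TopologicalSpace Z] [TopologicalSpace.PseudoMetrizableSpace Z]
    [MeasurableSpace Z] [BorelSpace Z] {c : Z → ℝ≥0∞} (hc : LowerSemicontinuous c) :
    LowerSemicontinuous fun Λ : FiniteMeasure Z => ∫⁻ z, c z ∂(Λ : Measure Z) := by
  let := TopologicalSpace.pseudoMetrizableSpacePseudoMetric Z
  have hle (k : ℕ) (z : Z) : lipschitzApprox c k z ≤ (k : ℝ≥0) :=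
    (lipschitzApprox_le_min c k z).trans (by simp)
  simp only [← iSup_lipschitzApprox hc, lintegral_iSup
    (fun k => (continuous_lipschitzApprox c k).measurable) (monotone_lipschitzApprox c)]
  exact lowerSemicontinuous_iSup fun k =>
    (continuous_lintegral_of_le (continuous_lipschitzApprox c k) (hle k)).lowerSemicontinuous

end LowerSemicontinuous

section Intensity

variable {ι X : Type*} [MeasurableSpace X]

variable (X) in
/-- The identity of `𝒫(X)`, seen as a Markov kernel from `𝒫(X)` to `X`. -/
def evalKernel : ProbabilityTheory.Kernel (ProbabilityMeasure X) X :=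
  ⟨ProbabilityMeasure.toMeasure, measurable_probabilityMeasure_toMeasure⟩

instance isMarkovKernel_evalKernel : ProbabilityTheory.IsMarkovKernel (evalKernel X) :=
  ⟨fun p => p.2⟩

/-- The intensity `A ↦ ∫ p(A) dΛ(p)` of a finite measure `Λ` on `𝒫(X)`. -/
def intensity (Λ : FiniteMeasure (ProbabilityMeasure X)) : FiniteMeasure X :=
  ⟨(Λ : Measure (ProbabilityMeasure X)).bind (evalKernel X), inferInstance⟩

lemma lintegral_intensity (Λ : FiniteMeasure (ProbabilityMeasure X)) {f : X → ℝ≥0∞}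
    (hf : Measurable f) :
    ∫⁻ x, f x ∂(intensity Λ : Measure X) =
      ∫⁻ p, ∫⁻ x, f x ∂(p : Measure X) ∂(Λ : Measure (ProbabilityMeasure X)) :=
  Measure.lintegral_bind (evalKernel X).aemeasurable hf.aemeasurable

lemma intensity_apply (Λ : FiniteMeasure (ProbabilityMeasure X)) {A : Set X}
    (hA : MeasurableSet A) :
    (intensity Λ : Measure X) A = ∫⁻ p, (p : Measure X) A ∂(Λ : Measure (ProbabilityMeasure X)) :=
  Measure.bind_apply hA (evalKernel X).aemeasurable

lemma mul_measure_le_intensity_apply (Λ : FiniteMeasure (ProbabilityMeasure X)) {A : Set X}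
    (hA : MeasurableSet A) (c : ℝ≥0∞) :
    c * (Λ : Measure (ProbabilityMeasure X)) {p | c ≤ (p : Measure X) A} ≤
      (intensity Λ : Measure X) A := by
  rw [intensity_apply Λ hA]
  exact mul_meas_ge_le_lintegral ((evalKernel X).measurable_coe hA) c

variable [TopologicalSpace X]

lemma continuous_intensity [TopologicalSpace.MetrizableSpace X] [SecondCountableTopology X]
    [BorelSpace X] :
    Continuous (intensity : FiniteMeasure (ProbabilityMeasure X) → FiniteMeasure X) := by
  refine continuous_iff_continuousAt.2 fun Λ =>
    FiniteMeasure.tendsto_iff_forall_lintegral_tendsto.2 fun f => ?_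
  simp only [lintegral_intensity _ f.continuous.measurable.coe_nnreal_ennreal]
  refine (continuous_lintegral_of_le (M := nndist f 0)
    (ProbabilityMeasure.continuous_lintegral_boundedContinuousFunction f) fun p => ?_).tendsto Λ
  calc ∫⁻ x, f x ∂(p : Measure X) ≤ ∫⁻ _, nndist f 0 ∂(p : Measure X) :=
        lintegral_mono fun x =>
          ENNReal.coe_le_coe.2 (BoundedContinuousFunction.NNReal.upper_bound f x)
    _ = nndist f 0 := by simp

lemma isTightMeasureSet_range_of_intensity [T2Space X] [NormalSpace X] [BorelSpace X]
    {Λ : ι → FiniteMeasure (ProbabilityMeasure X)}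
    (h : IsTightMeasureSet (range fun i => (intensity (Λ i) : Measure X))) :
    IsTightMeasureSet (range fun i => (Λ i : Measure (ProbabilityMeasure X))) := by
  simp only [isTightMeasureSet_iff_exists_isCompact_measure_compl_le, forall_mem_range] at h ⊢
  intro ε hε
  obtain ⟨u, -, hu, hu₀⟩ := exists_seq_strictAnti_tendsto (0 : ℝ≥0)
  obtain ⟨δ, hδ, hδε⟩ := ENNReal.exists_pos_sum_of_countable hε.ne' ℕ
  choose K hK hΛK using fun n => h (u n * δ n) (ENNReal.mul_pos_iff.2
    ⟨by exact_mod_cast hu n, by exact_mod_cast hδ n⟩)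
  refine ⟨{p | ∀ n, p (K n)ᶜ ≤ u n},
    isCompact_setOfPred_probabilityMeasure_mass_eq_compl_isCompact_le hu₀ hK
      (.inl inferInstance), fun i => ?_⟩
  let A (n : ℕ) : Set (ProbabilityMeasure X) := {p | (u n : ℝ≥0∞) ≤ (p : Measure X) (K n)ᶜ}
  have hA (n : ℕ) : (Λ i : Measure (ProbabilityMeasure X)) (A n) ≤ δ n := by
    have hun : (u n : ℝ≥0∞) ≠ 0 := by exact_mod_cast (hu n).ne'
    refine (ENNReal.mul_le_mul_iff_right hun ENNReal.coe_ne_top).1 (le_trans ?_ (hΛK n i))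
    exact mul_measure_le_intensity_apply (Λ i) (hK n).measurableSet.compl (u n)
  calc (Λ i : Measure (ProbabilityMeasure X)) {p | ∀ n, p (K n)ᶜ ≤ u n}ᶜ
      ≤ (Λ i : Measure (ProbabilityMeasure X)) (⋃ n, A n) := by
        refine measure_mono fun p hp => ?_
        simp only [mem_compl_iff, mem_ofPred_eq, not_forall, not_le] at hp
        obtain ⟨n, hn⟩ := hp
        refine mem_iUnion.2 ⟨n, ?_⟩
        rw [mem_ofPred_eq, ← ProbabilityMeasure.ennreal_coeFn_eq_coeFn_toMeasure]
        exact_mod_cast hn.le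
    _ ≤ ∑' n, (Λ i : Measure (ProbabilityMeasure X)) (A n) := measure_iUnion_le _
    _ ≤ ∑' n, (δ n : ℝ≥0∞) := ENNReal.tsum_le_tsum hA
    _ ≤ ε := hδε.le

end Intensity

lemma exists_isCompact_of_isTightMeasureSet_range {ι X : Type*} [TopologicalSpace X] [T2Space X]
    [NormalSpace X] [MeasurableSpace X] [BorelSpace X] {μ : ι → FiniteMeasure X}
    (hμ : IsTightMeasureSet (range fun i => (μ i : Measure X))) {M : ℝ≥0}
    (hM : ∀ i, (μ i).mass ≤ M) :
    ∃ 𝒦 : Set (FiniteMeasure X), IsCompact 𝒦 ∧ ∀ i, μ i ∈ 𝒦 := by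
  obtain ⟨u, -, hu, hu₀⟩ := exists_seq_strictAnti_tendsto (0 : ℝ≥0)
  choose K hK hμK using fun n => isTightMeasureSet_range_iff.1 hμ (u n) (hu n)
  exact ⟨_, isCompact_setOfPred_finiteMeasure_mass_le_compl_isCompact_le M hu₀ hK
    (.inl inferInstance), fun i => ⟨hM i, fun n => hμK n i⟩⟩

section Jensen

variable {X : Type*} [MeasurableSpace X]

/-- Convexity of a functional on `𝒫(X)`. It is phrased through mixtures of two probability
measures, because `𝒫(X)` is not a subset of a real vector space. -/
def MixtureConvex (g : ProbabilityMeasure X → ℝ≥0∞) : Prop :=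
  ∀ ⦃p q m : ProbabilityMeasure X⦄ ⦃t : ℝ⦄, 0 ≤ t → t ≤ 1 →
    (m : Measure X) =
      ENNReal.ofReal t • (p : Measure X) + ENNReal.ofReal (1 - t) • (q : Measure X) →
    g m ≤ ENNReal.ofReal t * g p + ENNReal.ofReal (1 - t) * g q

lemma exists_probabilityMeasure_eq_mixture (p q : ProbabilityMeasure X) {t : ℝ} (ht₀ : 0 ≤ t)
    (ht₁ : t ≤ 1) :
    ∃ m : ProbabilityMeasure X, (m : Measure X) =
      ENNReal.ofReal t • (p : Measure X) + ENNReal.ofReal (1 - t) • (q : Measure X) := by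
  refine ⟨⟨_, ⟨?_⟩⟩, rfl⟩
  simp [← ENNReal.ofReal_add ht₀ (sub_nonneg.2 ht₁)]

variable [TopologicalSpace X]

/-- The generalized moments of a probability measure with respect to a family of bounded
continuous functions. -/
def moments {κ : Type*} (f : κ → X →ᵇ ℝ) (p : ProbabilityMeasure X) : κ → ℝ :=
  fun i => ∫ x, f i x ∂(p : Measure X)

variable {κ : Type*}

section OpensMeasurableSpace

variable [OpensMeasurableSpace X]

lemma continuous_moments (f : κ → X →ᵇ ℝ) : Continuous (moments f) :=
  continuous_pi fun i => continuous_iff_continuousAt.2 fun _ =>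
    ProbabilityMeasure.tendsto_iff_forall_integral_tendsto.1 tendsto_id (f i)

lemma isInducing_moments_id : IsInducing (moments (id : (X →ᵇ ℝ) → X →ᵇ ℝ)) := by
  refine isInducing_iff_nhds.2 fun p => le_antisymm
    ((continuous_moments id).tendsto p).le_comap ?_
  refine tendsto_id'.1 (ProbabilityMeasure.tendsto_iff_forall_integral_tendsto.2 fun f => ?_)
  exact tendsto_pi_nhds.1 (tendsto_comap (f := moments id) (x := 𝓝 (moments id p))) f

lemma exists_finset_moments_preimage_subset {p : ProbabilityMeasure X}
    {U : Set (ProbabilityMeasure X)} (hU : U ∈ 𝓝 p) :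
    ∃ I : Finset (X →ᵇ ℝ), ∃ V ∈ 𝓝 (moments ((↑) : I → X →ᵇ ℝ) p),
      moments ((↑) : I → X →ᵇ ℝ) ⁻¹' V ⊆ U := by
  rw [isInducing_moments_id.nhds_eq_comap, mem_comap] at hU
  obtain ⟨W, hW, hWU⟩ := hU
  rw [nhds_pi, Filter.mem_pi] at hW
  obtain ⟨I, hI, s, hs, hsW⟩ := hW
  refine ⟨hI.toFinset, univ.pi fun i => s i, set_pi_mem_nhds finite_univ fun i _ => hs i,
    fun q hq => hWU (hsW fun i hi => hq ⟨i, hI.mem_toFinset.2 hi⟩ (mem_univ _))⟩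

lemma moments_mixture (f : κ → X →ᵇ ℝ) {p q m : ProbabilityMeasure X} {t : ℝ} (ht₀ : 0 ≤ t)
    (ht₁ : t ≤ 1) (hm : (m : Measure X) =
      ENNReal.ofReal t • (p : Measure X) + ENNReal.ofReal (1 - t) • (q : Measure X)) :
    moments f m = t • moments f p + (1 - t) • moments f q := by
  ext i
  simp only [moments, hm, Pi.add_apply, Pi.smul_apply]
  rw [integral_add_measure (((f i).integrable _).smul_measure ENNReal.ofReal_ne_top)
      (((f i).integrable _).smul_measure ENNReal.ofReal_ne_top), integral_smul_measure,
    integral_smul_measure, ENNReal.toReal_ofReal ht₀, ENNReal.toReal_ofReal (sub_nonneg.2 ht₁)]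

lemma MixtureConvex.convex_momentEpigraph {g : ProbabilityMeasure X → ℝ≥0∞}
    (hg : MixtureConvex g) (f : κ → X →ᵇ ℝ) :
    Convex ℝ {w : (κ → ℝ) × ℝ | 0 ≤ w.2 ∧ ∃ p, moments f p = w.1 ∧ g p ≤ ENNReal.ofReal w.2} := by
  rintro ⟨_, r⟩ ⟨hr, p, rfl, hp⟩ ⟨_, s⟩ ⟨hs, q, rfl, hq⟩ t t' ht ht' htt'
  obtain rfl : t' = 1 - t := by linarith
  obtain ⟨m, hm⟩ := exists_probabilityMeasure_eq_mixture p q ht (sub_nonneg.1 ht')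
  refine ⟨by simp only [Prod.mk_add_mk, Prod.smul_mk, smul_eq_mul]; positivity, m,
    moments_mixture f ht (sub_nonneg.1 ht') hm, (hg ht (sub_nonneg.1 ht') hm).trans ?_⟩
  simp only [Prod.mk_add_mk, Prod.smul_mk, smul_eq_mul]
  rw [ENNReal.ofReal_add (by positivity) (by positivity), ENNReal.ofReal_mul ht,
    ENNReal.ofReal_mul ht']
  gcongr

end OpensMeasurableSpace

variable [TopologicalSpace.MetrizableSpace X] [SecondCountableTopology X] [BorelSpace X]

lemma integrable_moments [Fintype κ] (Θ : Measure (ProbabilityMeasure X))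
    [IsFiniteMeasure Θ] (f : κ → X →ᵇ ℝ) : Integrable (moments f) Θ := by
  refine Integrable.of_eval fun i => Integrable.of_bound (C := ‖f i‖)
    ((continuous_apply i).comp (continuous_moments f)).aestronglyMeasurable ?_
  exact ae_of_all _ fun p => (f i).norm_integral_le_norm (p : Measure X)

lemma moments_eq_integral [Fintype κ] {Θ : Measure (ProbabilityMeasure X)}
    [IsFiniteMeasure Θ] {b : ProbabilityMeasure X} (hb : (b : Measure X) = Θ.bind (evalKernel X))
    (f : κ → X →ᵇ ℝ) : moments f b = ∫ p, moments f p ∂Θ := by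
  ext i
  rw [eval_integral fun i => (integrable_moments Θ f).eval i]
  have hf : Integrable (f i) (Θ.bind (evalKernel X)) := hb ▸ (f i).integrable (b : Measure X)
  rw [Measure.comp_eq_comp_const_apply] at hf hb
  simp only [moments, hb]
  exact ProbabilityTheory.Kernel.integral_comp hf

/-- The point `(∫ moments dΘ, ∫ g dΘ)` lies in the closure of a convex epigraph of `g` over
finitely many moments, and finitely many moments suffice for the lower semicontinuity of `g`. -/
theorem MixtureConvex.le_lintegral {g : ProbabilityMeasure X → ℝ≥0∞} (hg : MixtureConvex g)
    (hlsc : LowerSemicontinuous g) {Θ : Measure (ProbabilityMeasure X)} [IsProbabilityMeasure Θ]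
    {b : ProbabilityMeasure X} (hb : (b : Measure X) = Θ.bind (evalKernel X)) :
    g b ≤ ∫⁻ p, g p ∂Θ := by
  by_contra! hlt
  obtain ⟨r, hr, hrb⟩ := exists_between hlt
  have hfin : ∫⁻ p, g p ∂Θ ≠ ∞ := hr.ne_top
  obtain ⟨I, V, hV, hVr⟩ := exists_finset_moments_preimage_subset (hlsc b r hrb)
  set f : I → X →ᵇ ℝ := (↑)
  set S := {w : (I → ℝ) × ℝ | 0 ≤ w.2 ∧ ∃ p, moments f p = w.1 ∧ g p ≤ ENNReal.ofReal w.2}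
  have hg_lt : ∀ᵐ p ∂Θ, g p < ∞ := ae_lt_top hlsc.measurable hfin
  have hg_int : Integrable (fun p => (g p).toReal) Θ :=
    integrable_toReal_of_lintegral_ne_top hlsc.measurable.aemeasurable hfin
  have hmem : (moments f b, (∫⁻ p, g p ∂Θ).toReal) ∈ closure S := by
    rw [moments_eq_integral hb, ← integral_toReal hlsc.measurable.aemeasurable hg_lt,
      ← integral_pair (integrable_moments Θ f) hg_int]
    refine (hg.convex_momentEpigraph f).closure.integral_mem isClosed_closure ?_
      ((integrable_moments Θ f).prodMk hg_int)
    filter_upwards [hg_lt] with p hp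
    exact subset_closure ⟨ENNReal.toReal_nonneg, p, rfl, (ENNReal.ofReal_toReal hp.ne).ge⟩
  have hlt' : (∫⁻ p, g p ∂Θ).toReal < r.toReal :=
    (ENNReal.toReal_lt_toReal hfin hrb.ne_top).2 hr
  obtain ⟨⟨_, s⟩, ⟨hpV, hs⟩, hs₀, p, rfl, hp⟩ :=
    mem_closure_iff_nhds.1 hmem _ (prod_mem_nhds hV (Iio_mem_nhds hlt'))
  exact (hVr hpV).not_ge (hp.trans (ENNReal.ofReal_le_of_le_toReal hs.le))

end Jensen

section EIntegral

variable {α Z : Type*} [MeasurableSpace α]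

lemma measurable_posE : Measurable posE := measurable_ereal_toENNReal

lemma posE_add_ofReal_neg {a : EReal} {K : ℝ} (h : (K : EReal) ≤ a) :
    posE a + ENNReal.ofReal (-K) = (a - K).toENNReal + (posE (-a) + ENNReal.ofReal K) := by
  change a.toENNReal + _ = _ + ((-a).toENNReal + _)
  induction a with
  | bot => simp at h
  | top => simp
  | coe r =>
    have hKr : K ≤ r := EReal.coe_le_coe_iff.1 h
    rw [← EReal.coe_sub, ← EReal.coe_neg]
    simp only [EReal.real_coe_toENNReal, ENNReal.ofReal, ← ENNReal.coe_add, ENNReal.coe_inj,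
      ← NNReal.coe_inj, NNReal.coe_add, Real.coe_toNNReal']
    grind

lemma posE_neg_le {a : EReal} {K : ℝ} (h : (K : EReal) ≤ a) : posE (-a) ≤ ENNReal.ofReal (-K) :=
  EReal.toENNReal_le_toENNReal (EReal.neg_le_neg_iff.2 h)

lemma ereal_coe_sub_coe_of_add_eq_add {A B I D E : ℝ≥0∞} (hB : B ≠ ∞) (hD : D ≠ ∞) (hE : E ≠ ∞)
    (h : A + D = I + (B + E)) : (A : EReal) - B = I + (E.toReal - D.toReal : ℝ) := by
  lift B to ℝ≥0 using hB
  lift D to ℝ≥0 using hD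
  lift E to ℝ≥0 using hE
  induction I with
  | top =>
    obtain rfl : A = ∞ := by simpa using h
    exact (EReal.top_add_coe _).symm
  | coe I =>
    have hA : A ≠ ∞ := fun hA => by simp [hA, ← ENNReal.coe_add] at h
    lift A to ℝ≥0 using hA
    have h' : (A : ℝ) + D = I + (B + E) := by exact_mod_cast h
    change ((A : ℝ) : EReal) - (B : ℝ) = (I : ℝ) + ((E : ℝ) - (D : ℝ) : ℝ)
    rw [← EReal.coe_sub, ← EReal.coe_add]
    exact congrArg _ (by linarith)

lemma eIntegral_eq_lintegral_sub_add {μ : Measure α} [IsFiniteMeasure μ] {f : α → EReal}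
    (hf : Measurable f) {K : ℝ} (hK : ∀ x, (K : EReal) ≤ f x) :
    eIntegral μ f = ((∫⁻ x, (f x - K).toENNReal ∂μ : ℝ≥0∞) : EReal) + (K * μ.real univ : ℝ) := by
  have hneg : Measurable fun x => posE (-f x) := measurable_posE.comp hf.neg
  have hsum : ∫⁻ x, posE (f x) ∂μ + ENNReal.ofReal (-K) * μ univ =
      ∫⁻ x, (f x - K).toENNReal ∂μ + (∫⁻ x, posE (-f x) ∂μ + ENNReal.ofReal K * μ univ) := by
    rw [← lintegral_const, ← lintegral_const, ← lintegral_add_left hneg,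
      ← lintegral_add_right _ measurable_const, ← lintegral_add_right _ (hneg.add_const _)]
    exact lintegral_congr fun x => posE_add_ofReal_neg (hK x)
  have hfin (c : ℝ) : ENNReal.ofReal c * μ univ ≠ ∞ :=
    ENNReal.mul_ne_top ENNReal.ofReal_ne_top (measure_ne_top _ _)
  have hneg_fin : ∫⁻ x, posE (-f x) ∂μ ≠ ∞ := ne_top_of_le_ne_top (hfin (-K)) <| by
    rw [← lintegral_const]
    exact lintegral_mono fun x => posE_neg_le (hK x)
  rw [eIntegral, ereal_coe_sub_coe_of_add_eq_add hneg_fin (hfin _) (hfin _) hsum]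
  simp only [ENNReal.toReal_mul, ENNReal.toReal_ofReal', ← measureReal_def]
  rw [← sub_mul, max_zero_sub_max_neg_zero_eq_self]

lemma mul_measureReal_univ_le_eIntegral {μ : Measure α} [IsFiniteMeasure μ] {f : α → EReal}
    (hf : Measurable f) {K : ℝ} (hK : ∀ x, (K : EReal) ≤ f x) :
    (K * μ.real univ : ℝ) ≤ eIntegral μ f := by
  rw [eIntegral_eq_lintegral_sub_add hf hK]
  exact le_add_of_nonneg_left (EReal.coe_ennreal_nonneg _)

lemma eIntegral_map {β : Type*} [MeasurableSpace β] {μ : Measure α} {φ : α → β}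
    (hφ : Measurable φ) {f : β → EReal} (hf : Measurable f) :
    eIntegral (μ.map φ) f = eIntegral μ (f ∘ φ) := by
  rw [eIntegral, eIntegral, lintegral_map (f := fun y => posE (f y)) (measurable_posE.comp hf) hφ,
    lintegral_map (f := fun y => posE (-f y)) (measurable_posE.comp hf.neg) hφ]
  rfl

variable [TopologicalSpace Z]

lemma continuous_sub_coe (K : ℝ) : Continuous fun a : EReal => a - K :=
  continuous_iff_continuousAt.2 fun _ =>
    (EReal.continuousAt_add (.inr (EReal.coe_ne_bot (-K))) (.inr (EReal.coe_ne_top (-K)))).comp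
      (f := fun a : EReal => (a, ((-K : ℝ) : EReal))) (Continuous.prodMk_left _).continuousAt

lemma lowerSemicontinuous_toENNReal_sub {f : Z → EReal} (hf : LowerSemicontinuous f) (K : ℝ) :
    LowerSemicontinuous fun z => (f z - K).toENNReal :=
  (EReal.continuous_toENNReal.comp (continuous_sub_coe K)).comp_lowerSemicontinuous hf
    fun _ _ hab => EReal.toENNReal_le_toENNReal (EReal.sub_le_sub hab le_rfl)

lemma lowerSemicontinuous_eIntegral [TopologicalSpace.PseudoMetrizableSpace Z] [MeasurableSpace Z]
    [BorelSpace Z] {f : Z → EReal} (hf : LowerSemicontinuous f) {K : ℝ}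
    (hK : ∀ z, (K : EReal) ≤ f z) :
    LowerSemicontinuous fun Λ : FiniteMeasure Z => eIntegral (Λ : Measure Z) f := by
  simp only [eIntegral_eq_lintegral_sub_add hf.measurable hK]
  refine LowerSemicontinuous.add' ?_ ?_ fun Λ =>
    EReal.continuousAt_add (.inr (EReal.coe_ne_bot _)) (.inr (EReal.coe_ne_top _))
  · exact continuous_coe_ennreal_ereal.comp_lowerSemicontinuous
      (lowerSemicontinuous_lintegral (lowerSemicontinuous_toENNReal_sub hf K))
      EReal.coe_ennreal_strictMono.monotone
  · have hmass : Continuous fun Λ : FiniteMeasure Z => (Λ : Measure Z).real univ :=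
      NNReal.continuous_coe.comp FiniteMeasure.continuous_mass
    exact (continuous_coe_real_ereal.comp (continuous_const.mul hmass)).lowerSemicontinuous

lemma toENNReal_sub_le_of_le_mixture {a b m : EReal} {t : ℝ} (ht₀ : 0 ≤ t) (ht₁ : t ≤ 1) (K : ℝ)
    (hm : m ≤ (t : EReal) * a + ((1 - t : ℝ) : EReal) * b) :
    (m - K).toENNReal ≤
      ENNReal.ofReal t * (a - K).toENNReal + ENNReal.ofReal (1 - t) * (b - K).toENNReal := by
  have ht₀' : (0 : EReal) ≤ (t : EReal) := EReal.coe_nonneg.2 ht₀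
  have ht₁' : (0 : EReal) ≤ ((1 - t : ℝ) : EReal) := EReal.coe_nonneg.2 (sub_nonneg.2 ht₁)
  have hK : -(K : EReal) = (t : EReal) * -K + ((1 - t : ℝ) : EReal) * -K := by
    norm_cast
    ring
  calc (m - K).toENNReal
      ≤ ((t : EReal) * (a - K) + ((1 - t : ℝ) : EReal) * (b - K)).toENNReal := by
        refine EReal.toENNReal_le_toENNReal ?_
        rw [sub_eq_add_neg m, sub_eq_add_neg a, sub_eq_add_neg b,
          EReal.left_distrib_of_nonneg_of_ne_top ht₀' (EReal.coe_ne_top _),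
          EReal.left_distrib_of_nonneg_of_ne_top ht₁' (EReal.coe_ne_top _), add_add_add_comm, ← hK]
        exact add_le_add_left hm _
    _ ≤ _ := EReal.toENNReal_add_le
    _ = _ := by
        rw [EReal.toENNReal_mul ht₀', EReal.toENNReal_mul ht₁', EReal.real_coe_toENNReal,
          EReal.real_coe_toENNReal]

end EIntegral

section LiftedPlan

open ProbabilityTheory

instance nonempty_probabilityMeasure {X : Type*} [MeasurableSpace X] [Nonempty X] :
    Nonempty (ProbabilityMeasure X) :=
  ⟨⟨Measure.dirac (Classical.arbitrary X), inferInstance⟩⟩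

variable {X₁ X₂ : Type*} [MeasurableSpace X₁] [MeasurableSpace X₂] [StandardBorelSpace X₂]
  [Nonempty X₂]

section Lift

variable (γ : Measure (X₁ × X₂)) [IsFiniteMeasure γ]

/-- The disintegration `x ↦ γ_x` of a finite measure on `X₁ × X₂` with respect to its first
marginal, as a map into `𝒫(X₂)`. -/
def disintegration (x : X₁) : ProbabilityMeasure X₂ := ⟨γ.condKernel x, inferInstance⟩

lemma measurable_disintegration : Measurable (disintegration γ) :=
  γ.condKernel.measurable.subtype_mk

lemma measurable_prodMk_disintegration : Measurable fun x => (x, disintegration γ x) :=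
  measurable_id.prodMk (measurable_disintegration γ)

/-- The law of `(x, γ_x)` under the first marginal of `γ`, a measure on `X₁ × 𝒫(X₂)`. -/
def liftedPlan : FiniteMeasure (X₁ × ProbabilityMeasure X₂) :=
  ⟨γ.fst.map fun x => (x, disintegration γ x), inferInstance⟩

lemma map_fst_liftedPlan : ((liftedPlan γ).map Prod.fst : Measure X₁) = γ.fst := by
  change (γ.fst.map fun x => (x, disintegration γ x)).map Prod.fst = γ.fst
  rw [Measure.map_map measurable_fst (measurable_prodMk_disintegration γ)]
  exact Measure.map_id

lemma intensity_map_snd_liftedPlan :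
    (intensity ((liftedPlan γ).map Prod.snd) : Measure X₂) = γ.snd := by
  have hmap : ((liftedPlan γ).map Prod.snd : Measure (ProbabilityMeasure X₂)) =
      γ.fst.map (disintegration γ) :=
    Measure.map_map measurable_snd (measurable_prodMk_disintegration γ)
  ext s hs
  calc (intensity ((liftedPlan γ).map Prod.snd) : Measure X₂) s
      = ∫⁻ x, γ.condKernel x s ∂γ.fst := by
        rw [intensity_apply _ hs, hmap]
        exact lintegral_map ((evalKernel X₂).measurable_coe hs) (measurable_disintegration γ)
    _ = γ.snd s := by
        conv_rhs => rw [← γ.disintegrate γ.condKernel, Measure.snd_compProd,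
          Measure.bind_apply hs γ.condKernel.aemeasurable]

end Lift

section Projection

variable (Λ : FiniteMeasure (X₁ × ProbabilityMeasure X₂))

/-- The plan on `X₁ × X₂` whose first marginal is that of `Λ` and whose conditional measures are
the intensities of the conditional measures of `Λ`. -/
def barycentricPlan : Measure (X₁ × X₂) :=
  (Λ : Measure (X₁ × ProbabilityMeasure X₂)).fst ⊗ₘ
    (evalKernel X₂ ∘ₖ (Λ : Measure (X₁ × ProbabilityMeasure X₂)).condKernel)

instance isFiniteMeasure_barycentricPlan : IsFiniteMeasure (barycentricPlan Λ) := by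
  unfold barycentricPlan
  infer_instance

lemma fst_barycentricPlan : (barycentricPlan Λ).fst = (Λ.map Prod.fst : Measure X₁) :=
  Measure.fst_compProd _ _

lemma snd_barycentricPlan :
    (barycentricPlan Λ).snd = (intensity (Λ.map Prod.snd) : Measure X₂) := by
  rw [barycentricPlan, Measure.snd_compProd, ← Measure.comp_assoc,
    ← Measure.snd_compProd _ (Λ : Measure (X₁ × ProbabilityMeasure X₂)).condKernel,
    Measure.disintegrate]
  rfl

lemma disintegration_barycentricPlan :
    ∀ᵐ x ∂(Λ : Measure (X₁ × ProbabilityMeasure X₂)).fst,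
      (disintegration (barycentricPlan Λ) x : Measure X₂) =
        ((Λ : Measure (X₁ × ProbabilityMeasure X₂)).condKernel x).bind (evalKernel X₂) := by
  have h := (barycentricPlan Λ).disintegrate (barycentricPlan Λ).condKernel
  rw [fst_barycentricPlan] at h
  exact Kernel.ae_eq_of_compProd_eq h

variable [TopologicalSpace X₂] [TopologicalSpace.MetrizableSpace X₂] [SecondCountableTopology X₂]
  [BorelSpace X₂]

lemma lintegral_disintegration_barycentricPlan_le {c : X₁ × ProbabilityMeasure X₂ → ℝ≥0∞}
    (hc : Measurable c) (hlsc : ∀ x, LowerSemicontinuous fun p => c (x, p))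
    (hconv : ∀ x, MixtureConvex fun p => c (x, p)) :
    ∫⁻ x, c (x, disintegration (barycentricPlan Λ) x) ∂(barycentricPlan Λ).fst ≤
      ∫⁻ q, c q ∂(Λ : Measure (X₁ × ProbabilityMeasure X₂)) := by
  conv_rhs => rw [← (Λ : Measure (X₁ × ProbabilityMeasure X₂)).disintegrate
    (Λ : Measure (X₁ × ProbabilityMeasure X₂)).condKernel, Measure.lintegral_compProd hc]
  rw [fst_barycentricPlan]
  refine lintegral_mono_ae ?_
  filter_upwards [disintegration_barycentricPlan Λ] with x hx
  exact (hconv x).le_lintegral (hlsc x) hx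

end Projection

end LiftedPlan

section RelaxedProblem

variable {X₁ X₂ : Type*} [MeasurableSpace X₁] [MeasurableSpace X₂]

/-- The cost `ℱ₁(Λ₁|μ₁) + ℱ₂(γ₂|μ₂) + ∫ C dΛ` of a finite measure `Λ` on `X₁ × 𝒫(X₂)`, where `Λ₁`
is the first marginal of `Λ` and `γ₂` the intensity of the second one. It relaxes
`ℰ_C(·|μ₁,μ₂)`, for which `Λ` has to be carried by the graph of a map `X₁ → 𝒫(X₂)`. -/
def relaxedCost (C : X₁ → ProbabilityMeasure X₂ → EReal) (F₁ F₂ : EntropyFn) (μ₁ : Measure X₁)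
    (μ₂ : Measure X₂) (Λ : FiniteMeasure (X₁ × ProbabilityMeasure X₂)) : EReal :=
  (entF F₁ (Λ.map Prod.fst : Measure X₁) μ₁ : EReal) +
    (entF F₂ (intensity (Λ.map Prod.snd) : Measure X₂) μ₂ : EReal) +
    eIntegral (Λ : Measure (X₁ × ProbabilityMeasure X₂)) fun q => C q.1 q.2

section Reduction

variable [StandardBorelSpace X₂] [Nonempty X₂] {C : X₁ → ProbabilityMeasure X₂ → EReal}

lemma relaxedCost_liftedPlan (hC : Measurable fun q : X₁ × ProbabilityMeasure X₂ => C q.1 q.2)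
    (F₁ F₂ : EntropyFn) (μ₁ : Measure X₁) (μ₂ : Measure X₂) (γ : Measure (X₁ × X₂))
    [hγ : IsFiniteMeasure γ] :
    relaxedCost C F₁ F₂ μ₁ μ₂ (liftedPlan γ) = wCost C F₁ F₂ μ₁ μ₂ γ hγ := by
  have hint : eIntegral (liftedPlan γ : Measure (X₁ × ProbabilityMeasure X₂))
      (fun q => C q.1 q.2) = eIntegral γ.fst fun x => C x (disintegration γ x) :=
    eIntegral_map (measurable_prodMk_disintegration γ) hC
  rw [relaxedCost, hint, map_fst_liftedPlan, intensity_map_snd_liftedPlan]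
  rfl

lemma wCost_barycentricPlan_le [TopologicalSpace X₁] [OpensMeasurableSpace X₁]
    [TopologicalSpace X₂] [TopologicalSpace.MetrizableSpace X₂] [SecondCountableTopology X₂]
    [BorelSpace X₂]
    (hClsc : LowerSemicontinuous fun q : X₁ × ProbabilityMeasure X₂ => C q.1 q.2) {K : ℝ}
    (hK : ∀ x p, (K : EReal) ≤ C x p) (hconv : ∀ x, MixtureConvex fun p => (C x p - K).toENNReal)
    (F₁ F₂ : EntropyFn) (μ₁ : Measure X₁) (μ₂ : Measure X₂)
    (Λ : FiniteMeasure (X₁ × ProbabilityMeasure X₂)) :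
    wCost C F₁ F₂ μ₁ μ₂ (barycentricPlan Λ) inferInstance ≤ relaxedCost C F₁ F₂ μ₁ μ₂ Λ := by
  have hsub := lowerSemicontinuous_toENNReal_sub hClsc K
  have hC : Measurable fun x => C x (disintegration (barycentricPlan Λ) x) :=
    hClsc.measurable.comp (measurable_prodMk_disintegration _)
  have hmass : (barycentricPlan Λ).fst.real univ =
      (Λ : Measure (X₁ × ProbabilityMeasure X₂)).real univ := by
    rw [fst_barycentricPlan, measureReal_def, measureReal_def]
    congr 1
    exact Measure.fst_univ
  have hint : eIntegral (barycentricPlan Λ).fst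
      (fun x => C x (disintegration (barycentricPlan Λ) x)) ≤
        eIntegral (Λ : Measure (X₁ × ProbabilityMeasure X₂)) fun q => C q.1 q.2 := by
    rw [eIntegral_eq_lintegral_sub_add hC fun x => hK x _,
      eIntegral_eq_lintegral_sub_add hClsc.measurable fun q => hK q.1 q.2, hmass]
    refine add_le_add_left (EReal.coe_ennreal_le_coe_ennreal_iff.2 ?_) _
    exact lintegral_disintegration_barycentricPlan_le Λ hsub.measurable
      (fun x => hsub.comp (Continuous.prodMk_right x)) hconv
  rw [relaxedCost, ← fst_barycentricPlan, ← snd_barycentricPlan]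
  exact add_le_add_right hint _

lemma wOpt_eq_iInf_relaxedCost [TopologicalSpace X₁] [OpensMeasurableSpace X₁]
    [TopologicalSpace X₂] [TopologicalSpace.MetrizableSpace X₂] [SecondCountableTopology X₂]
    [BorelSpace X₂]
    (hClsc : LowerSemicontinuous fun q : X₁ × ProbabilityMeasure X₂ => C q.1 q.2) {K : ℝ}
    (hK : ∀ x p, (K : EReal) ≤ C x p) (hconv : ∀ x, MixtureConvex fun p => (C x p - K).toENNReal)
    (F₁ F₂ : EntropyFn) (μ₁ : Measure X₁) (μ₂ : Measure X₂) :
    wOpt C F₁ F₂ μ₁ μ₂ = ⨅ Λ, relaxedCost C F₁ F₂ μ₁ μ₂ Λ := by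
  refine le_antisymm (le_iInf fun Λ => ?_) (le_sInf ?_)
  · exact (wCost_barycentricPlan_le hClsc hK hconv F₁ F₂ μ₁ μ₂ Λ).trans'
      (sInf_le ⟨barycentricPlan Λ, inferInstance, rfl⟩)
  · rintro _ ⟨γ, _, rfl⟩
    exact (iInf_le _ _).trans (relaxedCost_liftedPlan hClsc.measurable F₁ F₂ μ₁ μ₂ γ).le

end Reduction

end RelaxedProblem

section Coercivity

variable {X₁ X₂ : Type*} [MeasurableSpace X₁] [MeasurableSpace X₂]
  {C : X₁ → ProbabilityMeasure X₂ → EReal} {K : ℝ} {F₁ F₂ : EntropyFn} {y : ℝ}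

lemma exists_entF_add_le_of_relaxedCost_le
    (hC : Measurable fun q : X₁ × ProbabilityMeasure X₂ => C q.1 q.2)
    (hK : ∀ x p, (K : EReal) ≤ C x p) {μ₁ : Measure X₁} {μ₂ : Measure X₂}
    {Λ : FiniteMeasure (X₁ × ProbabilityMeasure X₂)} (h : relaxedCost C F₁ F₂ μ₁ μ₂ Λ ≤ y) :
    ∃ e₁ e₂ : ℝ≥0, entF F₁ (Λ.map Prod.fst : Measure X₁) μ₁ = e₁ ∧
      entF F₂ (intensity (Λ.map Prod.snd) : Measure X₂) μ₂ = e₂ ∧ e₁ + e₂ + K * Λ.mass ≤ y := by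
  have hlow : (entF F₁ (Λ.map Prod.fst : Measure X₁) μ₁ : EReal) +
      (entF F₂ (intensity (Λ.map Prod.snd) : Measure X₂) μ₂ : EReal) +
        (K * Λ.mass : ℝ) ≤ y :=
    (add_le_add_right (mul_measureReal_univ_le_eIntegral hC fun q => hK q.1 q.2) _).trans h
  rw [← EReal.coe_ennreal_add] at hlow
  have hfin : entF F₁ (Λ.map Prod.fst : Measure X₁) μ₁ +
      entF F₂ (intensity (Λ.map Prod.snd) : Measure X₂) μ₂ ≠ ∞ := by
    intro htop
    rw [htop, EReal.coe_ennreal_top, EReal.top_add_coe] at hlow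
    exact hlow.not_gt (EReal.coe_lt_top y)
  obtain ⟨h₁, h₂⟩ := ENNReal.add_ne_top.1 hfin
  lift entF F₁ (Λ.map Prod.fst : Measure X₁) μ₁ to ℝ≥0 using h₁ with e₁
  lift entF F₂ (intensity (Λ.map Prod.snd) : Measure X₂) μ₂ to ℝ≥0 using h₂ with e₂
  rw [← ENNReal.coe_add, EReal.coe_nnreal_eq_coe_real, NNReal.coe_add] at hlow
  exact ⟨e₁, e₂, rfl, rfl, by exact_mod_cast hlow⟩

lemma mass_le_of_relaxedCost_le (hF₁ : F₁.Superlinear)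
    (hC : Measurable fun q : X₁ × ProbabilityMeasure X₂ => C q.1 q.2)
    (hK : ∀ x p, (K : EReal) ≤ C x p) {μ₁ : FiniteMeasure X₁} {μ₂ : Measure X₂}
    {Λ : FiniteMeasure (X₁ × ProbabilityMeasure X₂)}
    (h : relaxedCost C F₁ F₂ (μ₁ : Measure X₁) μ₂ Λ ≤ y) :
    Λ.mass ≤ y + F₁.conj (1 - K) * μ₁.mass := by
  obtain ⟨e₁, e₂, he₁, -, hle⟩ := exists_entF_add_le_of_relaxedCost_le hC hK h
  -- The slope `1 - K` beats the possibly negative contribution `K * Λ.mass` of the cost.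
  have hFenchel := hF₁.ofReal_mul_sub_le_entF (Λ.map Prod.fst : Measure X₁) (μ₁ : Measure X₁)
    MeasurableSet.univ (1 - K)
  have hmass : (Λ.map Prod.fst : Measure X₁).real univ = Λ.mass :=
    congrArg ENNReal.toReal Measure.fst_univ
  have hmass₁ : (μ₁ : Measure X₁).real univ = μ₁.mass := rfl
  rw [he₁, ← ENNReal.ofReal_coe_nnreal, ENNReal.ofReal_le_ofReal_iff e₁.coe_nonneg, hmass,
    hmass₁] at hFenchel
  linarith [e₂.coe_nonneg]

lemma exists_forall_le_of_relaxedCost_le (hF₁ : F₁.Superlinear)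
    (hC : Measurable fun q : X₁ × ProbabilityMeasure X₂ => C q.1 q.2)
    (hK : ∀ x p, (K : EReal) ≤ C x p) (F₂ : EntropyFn) (M : ℝ≥0) (y : ℝ) :
    ∃ R : ℝ≥0, ∀ (μ₁ : FiniteMeasure X₁) (μ₂ : Measure X₂)
      (Λ : FiniteMeasure (X₁ × ProbabilityMeasure X₂)), μ₁.mass ≤ M →
      relaxedCost C F₁ F₂ (μ₁ : Measure X₁) μ₂ Λ ≤ y →
      Λ.mass ≤ R ∧ entF F₁ (Λ.map Prod.fst : Measure X₁) (μ₁ : Measure X₁) ≤ R ∧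
        entF F₂ (intensity (Λ.map Prod.snd) : Measure X₂) μ₂ ≤ R := by
  let R₀ : ℝ≥0 := ‖y‖₊ + ‖F₁.conj (1 - K)‖₊ * M
  have hR₀ : (R₀ : ℝ) = |y| + |F₁.conj (1 - K)| * M := rfl
  refine ⟨R₀ + (‖y‖₊ + ‖K‖₊ * R₀), fun μ₁ μ₂ Λ hM h => ?_⟩
  have hmass : (Λ.mass : ℝ) ≤ R₀ := by
    have hconj : F₁.conj (1 - K) * μ₁.mass ≤ |F₁.conj (1 - K)| * M :=
      mul_le_mul (le_abs_self _) hM NNReal.zero_le_coe (abs_nonneg _)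
    linarith [mass_le_of_relaxedCost_le hF₁ hC hK h, le_abs_self y]
  have hcost : -(K * Λ.mass) ≤ |K| * R₀ := (neg_le_abs _).trans <| by
    rw [abs_mul, NNReal.abs_eq]
    exact mul_le_mul_of_nonneg_left hmass (abs_nonneg K)
  obtain ⟨e₁, e₂, he₁, he₂, hle⟩ := exists_entF_add_le_of_relaxedCost_le hC hK h
  simp only [he₁, he₂, ENNReal.coe_le_coe, ← NNReal.coe_le_coe, NNReal.coe_add, NNReal.coe_mul,
    coe_nnnorm, Real.norm_eq_abs]
  refine ⟨?_, ?_, ?_⟩ <;>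
    linarith [le_abs_self y, abs_nonneg y, e₁.coe_nonneg, e₂.coe_nonneg, R₀.coe_nonneg,
      mul_nonneg (abs_nonneg K) R₀.coe_nonneg]

variable [TopologicalSpace X₁] [TopologicalSpace.MetrizableSpace X₁] [BorelSpace X₁]
  [TopologicalSpace X₂] [TopologicalSpace.MetrizableSpace X₂] [SecondCountableTopology X₂]
  [BorelSpace X₂]

lemma exists_isCompact_of_relaxedCost_le (hF₁ : F₁.Superlinear) (hF₂ : F₂.Superlinear)
    (hC : Measurable fun q : X₁ × ProbabilityMeasure X₂ => C q.1 q.2)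
    (hK : ∀ x p, (K : EReal) ≤ C x p) {ι : Type*} {μ₁ : ι → FiniteMeasure X₁}
    {μ₂ : ι → FiniteMeasure X₂}
    (hμ₁ : IsTightMeasureSet (range fun i => (μ₁ i : Measure X₁)))
    (hμ₂ : IsTightMeasureSet (range fun i => (μ₂ i : Measure X₂))) {M : ℝ≥0}
    (hM : ∀ i, (μ₁ i).mass ≤ M) (y : ℝ) :
    ∃ 𝒦 : Set (FiniteMeasure (X₁ × ProbabilityMeasure X₂)), IsCompact 𝒦 ∧ ∀ i Λ,
      relaxedCost C F₁ F₂ (μ₁ i : Measure X₁) (μ₂ i : Measure X₂) Λ ≤ y → Λ ∈ 𝒦 := by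
  let J := {j : ι × FiniteMeasure (X₁ × ProbabilityMeasure X₂) //
    relaxedCost C F₁ F₂ (μ₁ j.1 : Measure X₁) (μ₂ j.1 : Measure X₂) j.2 ≤ y}
  let Λ (j : J) : FiniteMeasure (X₁ × ProbabilityMeasure X₂) := j.1.2
  obtain ⟨R, hR⟩ := exists_forall_le_of_relaxedCost_le hF₁ hC hK F₂ M y
  have hbound (j : J) := hR (μ₁ j.1.1) (μ₂ j.1.1) (Λ j) (hM _) j.2
  have hfst : IsTightMeasureSet (range fun j => ((Λ j).map Prod.fst : Measure X₁)) :=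
    hF₁.isTightMeasureSet_range (μ := fun j : J => μ₁ j.1.1)
      (hμ₁.subset (range_subset_iff.2 fun j => mem_range_self j.1.1)) fun j => (hbound j).2.1
  have hsnd : IsTightMeasureSet
      (range fun j => ((Λ j).map Prod.snd : Measure (ProbabilityMeasure X₂))) :=
    isTightMeasureSet_range_of_intensity <|
      hF₂.isTightMeasureSet_range (μ := fun j : J => μ₂ j.1.1)
        (hμ₂.subset (range_subset_iff.2 fun j => mem_range_self j.1.1)) fun j => (hbound j).2.2
  have htight : IsTightMeasureSet
      (range fun j => (Λ j : Measure (X₁ × ProbabilityMeasure X₂))) := by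
    refine .prodMk ?_ ?_ <;> rw [← range_comp]
    exacts [hfst, hsnd]
  obtain ⟨𝒦, h𝒦, hmem⟩ := exists_isCompact_of_isTightMeasureSet_range htight fun j => (hbound j).1
  exact ⟨𝒦, h𝒦, fun i Λ hΛ => hmem ⟨(i, Λ), hΛ⟩⟩

end Coercivity

section RelaxedSemicontinuity

variable {X₁ X₂ : Type*} [MeasurableSpace X₁] [MeasurableSpace X₂]
  [TopologicalSpace X₁] [TopologicalSpace.MetrizableSpace X₁] [BorelSpace X₁]
  [TopologicalSpace X₂] [TopologicalSpace.MetrizableSpace X₂] [SecondCountableTopology X₂]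
  [BorelSpace X₂] {C : X₁ → ProbabilityMeasure X₂ → EReal}

lemma lowerSemicontinuous_relaxedCost
    (hClsc : LowerSemicontinuous fun q : X₁ × ProbabilityMeasure X₂ => C q.1 q.2) {K : ℝ}
    (hK : ∀ x p, (K : EReal) ≤ C x p) {F₁ F₂ : EntropyFn} (hF₁ : F₁.Superlinear)
    (hF₂ : F₂.Superlinear) :
    LowerSemicontinuous fun q : (FiniteMeasure X₁ × FiniteMeasure X₂) ×
        FiniteMeasure (X₁ × ProbabilityMeasure X₂) =>
      relaxedCost C F₁ F₂ (q.1.1 : Measure X₁) (q.1.2 : Measure X₂) q.2 := by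
  have hfst : Continuous fun q : (FiniteMeasure X₁ × FiniteMeasure X₂) ×
      FiniteMeasure (X₁ × ProbabilityMeasure X₂) => (q.2.map Prod.fst, q.1.1) :=
    ((FiniteMeasure.continuous_map continuous_fst).comp continuous_snd).prodMk
      (continuous_fst.comp continuous_fst)
  have hsnd : Continuous fun q : (FiniteMeasure X₁ × FiniteMeasure X₂) ×
      FiniteMeasure (X₁ × ProbabilityMeasure X₂) => (intensity (q.2.map Prod.snd), q.1.2) :=
    ((continuous_intensity.comp (FiniteMeasure.continuous_map continuous_snd)).comp
      continuous_snd).prodMk (continuous_snd.comp continuous_fst)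
  have hent := continuous_coe_ennreal_ereal.comp_lowerSemicontinuous
    ((hF₁.lowerSemicontinuous_entF.comp hfst).add (hF₂.lowerSemicontinuous_entF.comp hsnd))
    EReal.coe_ennreal_strictMono.monotone
  have hcost := (lowerSemicontinuous_eIntegral hClsc fun q => hK q.1 q.2).comp
    (continuous_snd (X := FiniteMeasure X₁ × FiniteMeasure X₂))
  have hbot (Λ : FiniteMeasure (X₁ × ProbabilityMeasure X₂)) :
      eIntegral (Λ : Measure (X₁ × ProbabilityMeasure X₂)) (fun q => C q.1 q.2) ≠ ⊥ :=
    ((EReal.bot_lt_coe _).trans_le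
      (mul_measureReal_univ_le_eIntegral hClsc.measurable fun q => hK q.1 q.2)).ne'
  simp only [relaxedCost, ← EReal.coe_ennreal_add]
  exact hent.add' hcost fun q =>
    EReal.continuousAt_add (.inr (hbot q.2)) (.inl (EReal.coe_ennreal_ne_bot _))

end RelaxedSemicontinuity

theorem stmt10
    {X₁ : Type*} [MetricSpace X₁] [PolishSpace X₁] [MeasurableSpace X₁] [BorelSpace X₁]
    {X₂ : Type*} [MetricSpace X₂] [PolishSpace X₂] [MeasurableSpace X₂] [BorelSpace X₂]
    [Nonempty X₂]
    (C : X₁ → ProbabilityMeasure X₂ → EReal)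
    (hClsc : LowerSemicontinuous fun q : X₁ × ProbabilityMeasure X₂ => C q.1 q.2)
    (hCbdd : ∃ K : ℝ, ∀ x p, (K : EReal) ≤ C x p)
    (hCconv : ∀ (x : X₁) (p q m : ProbabilityMeasure X₂) (t : ℝ), 0 ≤ t → t ≤ 1 →
      (m : Measure X₂) = ENNReal.ofReal t • (p : Measure X₂)
          + ENNReal.ofReal (1 - t) • (q : Measure X₂) →
      C x m ≤ (t : EReal) * C x p + ((1 - t : ℝ) : EReal) * C x q)
    (F₁ F₂ : EntropyFn) (hF₁ : F₁.Superlinear) (hF₂ : F₂.Superlinear)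
    (μ₁ : FiniteMeasure X₁) (μ₂ : FiniteMeasure X₂)
    (μ₁n : ℕ → FiniteMeasure X₁) (μ₂n : ℕ → FiniteMeasure X₂)
    (h₁ : Filter.Tendsto μ₁n Filter.atTop (nhds μ₁))
    (h₂ : Filter.Tendsto μ₂n Filter.atTop (nhds μ₂)) :
    wOpt C F₁ F₂ (μ₁ : Measure X₁) (μ₂ : Measure X₂)
      ≤ Filter.liminf
          (fun n => wOpt C F₁ F₂ (μ₁n n : Measure X₁) (μ₂n n : Measure X₂))
          Filter.atTop := by
  obtain ⟨K, hK⟩ := hCbdd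
  have hconv (x : X₁) : MixtureConvex fun p => (C x p - K).toENNReal :=
    fun p q m t ht₀ ht₁ hm => toENNReal_sub_le_of_le_mixture ht₀ ht₁ K (hCconv x p q m t ht₀ ht₁ hm)
  obtain ⟨M, hM⟩ := h₁.mass.bddAbove_range
  simp only [wOpt_eq_iInf_relaxedCost hClsc hK hconv]
  apply iInf_le_liminf_of_isCompact (g := fun ν : FiniteMeasure X₁ × FiniteMeasure X₂ =>
      relaxedCost C F₁ F₂ (ν.1 : Measure X₁) (ν.2 : Measure X₂))
    (lowerSemicontinuous_relaxedCost hClsc hK hF₁ hF₂) (h₁.prodMk_nhds h₂)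
  intro y hy
  obtain ⟨r, hyr, -⟩ := EReal.lt_iff_exists_real_btwn.1 hy
  obtain ⟨𝒦, h𝒦, hmem⟩ := exists_isCompact_of_relaxedCost_le hF₁ hF₂ hClsc.measurable hK
    (isTightMeasureSet_range_of_tendsto h₁) (isTightMeasureSet_range_of_tendsto h₂)
    (fun n => hM (mem_range_self n)) r
  exact ⟨𝒦, h𝒦, .of_forall fun n Λ hΛ => hmem n Λ (hΛ.trans hyr.le)⟩
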